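/- arXiv:2301.05005 — 5 statements merged into one kernel-verified Lean document; each statement's English description precedes it below -/
import Mathlib

section
/- Let k, m, n be natural numbers, A an m×k complex matrix, B a k×n complex matrix, and let r be the rank of the product AB. Then there exist an m×r complex matrix L and an r×n complex matrix R such that AB = LR, ‖L‖_∞ ≤ ‖A‖_∞, ‖R‖_∞ ≤ ‖B‖_∞, ‖L‖₂ ≤ ‖A‖₂, ‖R‖₂ ≤ ‖B‖₂, ‖L‖_r ≤ ‖A‖_r, and ‖R‖_c ≤ ‖B‖_c. -/
open Matrix BigOperators

/-- The ℓ²→ℓ² operator norm of a complex matrix. -/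
noncomputable def opNorm {m n : ℕ} (A : Matrix (Fin m) (Fin n) ℂ) : ℝ :=
  ‖(Matrix.toEuclideanLin A).toContinuousLinearMap‖

/-- The Frobenius (Hilbert–Schmidt) norm of a complex matrix. -/
noncomputable def frobNorm {m n : ℕ} (A : Matrix (Fin m) (Fin n) ℂ) : ℝ :=
  Real.sqrt (∑ i, ∑ j, ‖A i j‖ ^ 2)

/-- The column norm: the maximum Euclidean norm of a column. -/
noncomputable def colNorm {l m : ℕ} (L : Matrix (Fin l) (Fin m) ℂ) : ℝ :=
  ⨆ j : Fin m, Real.sqrt (∑ i, ‖L i j‖ ^ 2)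

/-- The row norm: the column norm of the conjugate transpose. -/
noncomputable def rowNorm {l m : ℕ} (L : Matrix (Fin l) (Fin m) ℂ) : ℝ :=
  colNorm Lᴴ

lemma aux_bessel {k r : ℕ} {v : Fin r → EuclideanSpace ℂ (Fin k)} (hv : Orthonormal ℂ v)
    (V : Matrix (Fin k) (Fin r) ℂ) (hV : ∀ i j, V i j = v j i) (x : Fin k → ℂ) :
    ∑ j, ‖(Vᴴ *ᵥ x) j‖ ^ 2 ≤ ∑ i, ‖x i‖ ^ 2 := by
  have h := hv.sum_inner_products_le (WithLp.toLp 2 x) (s := Finset.univ)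
  rw [EuclideanSpace.norm_sq_eq] at h
  refine le_trans (le_of_eq ?_) h
  refine Finset.sum_congr rfl fun j _ => ?_
  congr 2
  simp [Matrix.mulVec, dotProduct, PiLp.inner_apply, hV, mul_comm]

lemma aux_bessel_col {k r n : ℕ} {v : Fin r → EuclideanSpace ℂ (Fin k)} (hv : Orthonormal ℂ v)
    (V : Matrix (Fin k) (Fin r) ℂ) (hV : ∀ i j, V i j = v j i) (B : Matrix (Fin k) (Fin n) ℂ)
    (j : Fin n) :
    ∑ i, ‖(Vᴴ * B) i j‖ ^ 2 ≤ ∑ i, ‖B i j‖ ^ 2 :=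
  aux_bessel hv V hV (fun i => B i j)

lemma aux_norms {k r n : ℕ} {v : Fin r → EuclideanSpace ℂ (Fin k)} (hv : Orthonormal ℂ v)
    (V : Matrix (Fin k) (Fin r) ℂ) (hV : ∀ i j, V i j = v j i) (B : Matrix (Fin k) (Fin n) ℂ) :
    opNorm (Vᴴ * B) ≤ opNorm B ∧ frobNorm (Vᴴ * B) ≤ frobNorm B ∧
      colNorm (Vᴴ * B) ≤ colNorm B := by
  refine ⟨?_, ?_, ?_⟩
  · unfold opNorm
    refine ContinuousLinearMap.opNorm_le_bound _ (norm_nonneg _) fun y => ?_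
    refine le_trans ?_ ((Matrix.toEuclideanLin B).toContinuousLinearMap.le_opNorm y)
    rw [EuclideanSpace.norm_eq, EuclideanSpace.norm_eq]
    apply Real.sqrt_le_sqrt
    have := aux_bessel hv V hV (B *ᵥ y.ofLp)
    simpa [Matrix.toLpLin_apply, Matrix.mulVec_mulVec] using this
  · unfold frobNorm
    apply Real.sqrt_le_sqrt
    rw [Finset.sum_comm, Finset.sum_comm (f := fun i j => ‖B i j‖ ^ 2)]
    exact Finset.sum_le_sum fun j _ => aux_bessel_col hv V hV B j
  · unfold colNorm
    exact ciSup_mono (Set.finite_range _).bddAbove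
      fun j => Real.sqrt_le_sqrt (aux_bessel_col hv V hV B j)

open scoped Matrix.Norms.L2Operator in
lemma aux_opNorm_conj {m n : ℕ} (A : Matrix (Fin m) (Fin n) ℂ) : opNorm Aᴴ = opNorm A :=
  Matrix.l2_opNorm_conjTranspose A

lemma aux_frob_conj {m n : ℕ} (A : Matrix (Fin m) (Fin n) ℂ) : frobNorm Aᴴ = frobNorm A := by
  unfold frobNorm
  rw [Finset.sum_comm]
  simp

lemma aux_subspace {E F G : Type*} [NormedAddCommGroup E] [InnerProductSpace ℂ E]
    [FiniteDimensional ℂ E] [AddCommGroup F] [Module ℂ F] [AddCommGroup G] [Module ℂ G]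
    (T : E →ₗ[ℂ] F) (U : G →ₗ[ℂ] E) :
    ∃ S : Submodule ℂ E, Module.finrank ℂ S = Module.finrank ℂ (LinearMap.range (T ∘ₗ U)) ∧
      ∀ y, T (S.starProjection (U y)) = T (U y) := by
  let W := (LinearMap.ker T)ᗮ
  have hTW : ∀ x, T (W.starProjection x) = T x := by
    intro x
    have h : x - W.starProjection x ∈ Wᗮ := Submodule.sub_starProjection_mem_orthogonal x
    rw [Submodule.orthogonal_orthogonal] at h
    have := LinearMap.mem_ker.1 h
    rw [map_sub, sub_eq_zero] at this
    exact this.symm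
  let Q : E →ₗ[ℂ] E := W.starProjection.toLinearMap
  let S := LinearMap.range (Q ∘ₗ U)
  have hSW : S ≤ W := by
    rintro _ ⟨y, rfl⟩
    exact Submodule.starProjection_apply_mem W (U y)
  refine ⟨S, ?_, fun y => ?_⟩
  · have hmap : LinearMap.range (T ∘ₗ U) = S.map T := by
      rw [← LinearMap.range_comp]
      congr 1
      ext y
      exact (hTW (U y)).symm
    rw [hmap]
    symm
    have hinj : Function.Injective (T.domRestrict S) := by
      rw [← LinearMap.ker_eq_bot, LinearMap.ker_eq_bot']
      rintro ⟨s, hs⟩ h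
      have h1 : s ∈ LinearMap.ker T := h
      have h2 := hSW hs s h1
      exact Subtype.ext (inner_self_eq_zero.1 h2)
    rw [← LinearMap.finrank_range_of_inj hinj, LinearMap.range_domRestrict]
  · have h1 : S.starProjection (W.starProjection (U y)) = W.starProjection (U y) :=
      Submodule.starProjection_eq_self_iff.2 ⟨y, rfl⟩
    have h2 : S.starProjection (U y - W.starProjection (U y)) = 0 := by
      rw [Submodule.starProjection_apply_eq_zero_iff]
      exact Submodule.orthogonal_le hSW (Submodule.sub_starProjection_mem_orthogonal _)
    rw [map_sub, sub_eq_zero, h1] at h2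
    rw [h2, hTW]

/-- A product `A * B` of rank `r` can be rewritten as a product `L * R` with inner
dimension `r`, without increasing the operator, Frobenius, row and column norms of the
respective factors. -/
theorem exists_rank_factorization_norms_le
    (k m n : ℕ) (A : Matrix (Fin m) (Fin k) ℂ) (B : Matrix (Fin k) (Fin n) ℂ) :
    ∃ (L : Matrix (Fin m) (Fin ((A * B).rank)) ℂ) (R : Matrix (Fin ((A * B).rank)) (Fin n) ℂ),
      A * B = L * R ∧
      opNorm L ≤ opNorm A ∧ opNorm R ≤ opNorm B ∧
      frobNorm L ≤ frobNorm A ∧ frobNorm R ≤ frobNorm B ∧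
      rowNorm L ≤ rowNorm A ∧ colNorm R ≤ colNorm B := by
  obtain ⟨S, hS, hP⟩ := aux_subspace (Matrix.toEuclideanLin A) (Matrix.toEuclideanLin B)
  have hr : Module.finrank ℂ S = (A * B).rank := by
    have hc : Matrix.toEuclideanLin A ∘ₗ Matrix.toEuclideanLin B =
        Matrix.toEuclideanLin (A * B) := by
      ext y : 1
      simp [Matrix.toLpLin_apply, Matrix.mulVec_mulVec]
    rw [hS, hc, Matrix.rank_eq_finrank_range_toLin (A * B) (EuclideanSpace.basisFun _ ℂ).toBasis
      (EuclideanSpace.basisFun _ ℂ).toBasis, ← Matrix.toEuclideanLin_eq_toLin_orthonormal]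
  let b := (stdOrthonormalBasis ℂ S).reindex (finCongr hr)
  let v : Fin (A * B).rank → EuclideanSpace ℂ (Fin k) := fun j => (b j : EuclideanSpace ℂ (Fin k))
  have hv : Orthonormal ℂ v := b.orthonormal.comp_linearIsometry S.subtypeₗᵢ
  let V : Matrix (Fin k) (Fin (A * B).rank) ℂ := Matrix.of fun i j => v j i
  have hV : ∀ i j, V i j = v j i := fun _ _ => rfl
  have hVV : ∀ x : EuclideanSpace ℂ (Fin k),
      (S.starProjection x).ofLp = V *ᵥ (Vᴴ *ᵥ x.ofLp) := by
    intro x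
    have h := b.orthogonalProjection_apply_eq_sum x
    have h' : S.starProjection x = ∑ j, inner ℂ (v j) x • v j := by
      rw [Submodule.starProjection_apply, h]
      simp [v]
    rw [h']
    ext i
    simp [Matrix.mulVec, dotProduct, PiLp.inner_apply, hV, mul_comm]
  obtain ⟨hB1, hB2, hB3⟩ := aux_norms hv V hV B
  obtain ⟨hA1, hA2, hA3⟩ := aux_norms hv V hV Aᴴ
  have hL : Vᴴ * Aᴴ = (A * V)ᴴ := (Matrix.conjTranspose_mul A V).symm
  rw [hL, aux_opNorm_conj, aux_opNorm_conj] at hA1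
  rw [hL, aux_frob_conj, aux_frob_conj] at hA2
  rw [hL] at hA3
  refine ⟨A * V, Vᴴ * B, ?_, hA1, hB1, hA2, hB2, hA3, hB3⟩
  apply Matrix.ext_of_mulVec_single
  intro j
  have h := congrArg WithLp.ofLp (hP (WithLp.toLp 2 (Pi.single j 1)))
  simp only [Matrix.toLpLin_apply] at h
  rw [hVV] at h
  simp only [Matrix.mulVec_mulVec] at h
  rw [← h]
  simp only [Matrix.mul_assoc]
end

section
/- Let X be an m×n complex matrix of rank r. Then there exist an r×m complex matrix L and an r×n complex matrix R, both of rank r, such that X = Lᴴ R and ‖L‖_c · ‖R‖_c = ‖S_X‖, where ‖S_X‖ is the operator norm of the Schur multiplication map A ↦ X ∘ A on the m×n complex matrices equipped with the ℓ²→ℓ² operator norm. -/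
open Matrix BigOperators

/-- The Schur multiplier norm of `X` : the operator norm of `A ↦ X ∘ A` where the
matrices carry the ℓ²→ℓ² operator norm. -/
noncomputable def schurNorm {m n : ℕ} (X : Matrix (Fin m) (Fin n) ℂ) : ℝ :=
  ⨆ A : {A : Matrix (Fin m) (Fin n) ℂ // opNorm A ≤ 1}, opNorm (Matrix.hadamard X A.1)


lemma inner_toLin {m n : ℕ} (A : Matrix (Fin m) (Fin n) ℂ) (u : EuclideanSpace ℂ (Fin m)) (v : EuclideanSpace ℂ (Fin n)) :
    inner ℂ u (Matrix.toEuclideanLin A v) = ∑ i, ∑ j, star (u i) * A i j * v j := by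
  simp only [PiLp.inner_apply, Matrix.toLpLin_apply, Matrix.mulVec, dotProduct, RCLike.inner_apply, Finset.sum_mul]
  refine Finset.sum_congr rfl fun i _ => Finset.sum_congr rfl fun j _ => ?_
  simp; ring

lemma opNorm_nonneg' {m n : ℕ} (A : Matrix (Fin m) (Fin n) ℂ) : 0 ≤ opNorm A := norm_nonneg _

lemma le_opNorm' {m n : ℕ} (A : Matrix (Fin m) (Fin n) ℂ) (v : EuclideanSpace ℂ (Fin n)) :
    ‖Matrix.toEuclideanLin A v‖ ≤ opNorm A * ‖v‖ :=
  (Matrix.toEuclideanLin A).toContinuousLinearMap.le_opNorm v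

lemma inner_le_opNorm {m n : ℕ} (A : Matrix (Fin m) (Fin n) ℂ) (u : EuclideanSpace ℂ (Fin m)) (v : EuclideanSpace ℂ (Fin n)) :
    ‖inner ℂ u (Matrix.toEuclideanLin A v)‖ ≤ opNorm A * ‖u‖ * ‖v‖ := by
  refine (norm_inner_le_norm _ _).trans ?_
  have := mul_le_mul_of_nonneg_left (le_opNorm' A v) (norm_nonneg u)
  linarith

lemma opNorm_le_of {m n : ℕ} (A : Matrix (Fin m) (Fin n) ℂ) (c : ℝ) (hc : 0 ≤ c)
    (h : ∀ (u : EuclideanSpace ℂ (Fin m)) (v : EuclideanSpace ℂ (Fin n)),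
      ‖inner ℂ u (Matrix.toEuclideanLin A v)‖ ≤ c * ‖u‖ * ‖v‖) : opNorm A ≤ c := by
  refine ContinuousLinearMap.opNorm_le_bound _ hc fun v => ?_
  have h1 := h (Matrix.toEuclideanLin A v) v
  change ‖Matrix.toEuclideanLin A v‖ ≤ _
  rw [inner_self_eq_norm_sq_to_K] at h1
  simp only [norm_pow, Complex.norm_real, norm_norm, Complex.coe_algebraMap] at h1
  rcases (norm_nonneg (Matrix.toEuclideanLin A v)).eq_or_lt with h0 | h0
  · rw [← h0]; positivity
  · by_contra hh
    push Not at hh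
    nlinarith

lemma colNorm_nonneg {l m : ℕ} (L : Matrix (Fin l) (Fin m) ℂ) : 0 ≤ colNorm L :=
  Real.iSup_nonneg fun _ => Real.sqrt_nonneg _

lemma le_colNorm {l m : ℕ} (L : Matrix (Fin l) (Fin m) ℂ) (j : Fin m) :
    ∑ i, ‖L i j‖ ^ 2 ≤ colNorm L ^ 2 := by
  have : Real.sqrt (∑ i, ‖L i j‖ ^ 2) ≤ colNorm L :=
    le_ciSup (f := fun j : Fin m => Real.sqrt (∑ i, ‖L i j‖ ^ 2)) (Set.finite_range _).bddAbove j
  exact (Real.sqrt_le_left (colNorm_nonneg L)).1 this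

lemma colsum {l m : ℕ} (L : Matrix (Fin l) (Fin m) ℂ) (u : EuclideanSpace ℂ (Fin m)) :
    ∑ k, ‖(WithLp.toLp 2 (fun i => L k i * u i) : EuclideanSpace ℂ (Fin m))‖ ^ 2
      ≤ (colNorm L * ‖u‖) ^ 2 := by
  simp only [EuclideanSpace.norm_sq_eq, norm_mul, mul_pow]
  rw [Finset.sum_comm, Finset.mul_sum]
  refine Finset.sum_le_sum fun i _ => ?_
  rw [← Finset.sum_mul]
  exact mul_le_mul_of_nonneg_right (le_colNorm L i) (by positivity)

lemma easy {l m n : ℕ} (L : Matrix (Fin l) (Fin m) ℂ) (R : Matrix (Fin l) (Fin n) ℂ)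
    (A : Matrix (Fin m) (Fin n) ℂ) (hA : opNorm A ≤ 1) :
    opNorm (Matrix.hadamard (Lᴴ * R) A) ≤ colNorm L * colNorm R := by
  refine opNorm_le_of _ _ (mul_nonneg (colNorm_nonneg _) (colNorm_nonneg _)) fun u v => ?_
  have e : inner ℂ u (Matrix.toEuclideanLin (Matrix.hadamard (Lᴴ * R) A) v) =
      ∑ k, inner ℂ (WithLp.toLp 2 (fun i => L k i * u i) : EuclideanSpace ℂ (Fin m))
        (Matrix.toEuclideanLin A (WithLp.toLp 2 (fun j => R k j * v j))) := by
    simp only [inner_toLin]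
    symm
    rw [Finset.sum_comm]
    refine Finset.sum_congr rfl fun i _ => ?_
    rw [Finset.sum_comm]
    refine Finset.sum_congr rfl fun j _ => ?_
    simp only [Matrix.hadamard_apply, Matrix.mul_apply, Matrix.conjTranspose_apply, Finset.sum_mul, Finset.mul_sum]
    refine Finset.sum_congr rfl fun k _ => ?_
    simp; ring
  rw [e]
  have h1 : ∀ k, ‖inner ℂ (WithLp.toLp 2 (fun i => L k i * u i) : EuclideanSpace ℂ (Fin m))
        (Matrix.toEuclideanLin A (WithLp.toLp 2 (fun j => R k j * v j)))‖ ≤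
      ‖(WithLp.toLp 2 (fun i => L k i * u i) : EuclideanSpace ℂ (Fin m))‖ *
      ‖(WithLp.toLp 2 (fun i => R k i * v i) : EuclideanSpace ℂ (Fin n))‖ := fun k => by
    refine (inner_le_opNorm _ _ _).trans ?_
    rw [mul_assoc]
    exact mul_le_of_le_one_left (by positivity) hA
  refine (norm_sum_le _ _).trans ((Finset.sum_le_sum fun k _ => h1 k).trans ?_)
  refine le_trans (abs_le_of_sq_le_sq' (b := colNorm L * colNorm R * ‖u‖ * ‖v‖) ?_ ?_).2 le_rfl
  · refine (Finset.sum_mul_sq_le_sq_mul_sq _ _ _).trans ?_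
    have := mul_le_mul (colsum L u) (colsum R v) (by positivity) (by positivity)
    refine this.trans (le_of_eq (by ring))
  · have := colNorm_nonneg L
    have := colNorm_nonneg R
    positivity

lemma schur_bdd {m n : ℕ} (X : Matrix (Fin m) (Fin n) ℂ) :
    BddAbove (Set.range fun A : {A : Matrix (Fin m) (Fin n) ℂ // opNorm A ≤ 1} =>
      opNorm (Matrix.hadamard X A.1)) := by
  refine ⟨colNorm (1 : Matrix (Fin m) (Fin m) ℂ) * colNorm X, ?_⟩
  rintro _ ⟨A, rfl⟩
  have := easy (1 : Matrix (Fin m) (Fin m) ℂ) X A.1 A.2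
  simpa using this

lemma le_schur {m n : ℕ} (X A : Matrix (Fin m) (Fin n) ℂ) (hA : opNorm A ≤ 1) :
    opNorm (Matrix.hadamard X A) ≤ schurNorm X :=
  le_ciSup (schur_bdd X) ⟨A, hA⟩

lemma schur_nonneg {m n : ℕ} (X : Matrix (Fin m) (Fin n) ℂ) : 0 ≤ schurNorm X :=
  Real.iSup_nonneg fun _ => opNorm_nonneg' _

lemma schur_le {l m n : ℕ} (L : Matrix (Fin l) (Fin m) ℂ) (R : Matrix (Fin l) (Fin n) ℂ) :
    schurNorm (Lᴴ * R) ≤ colNorm L * colNorm R :=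
  Real.iSup_le (fun A => easy L R A.1 A.2) (mul_nonneg (colNorm_nonneg _) (colNorm_nonneg _))

/-- the dual estimate -/
lemma dual_est {m n : ℕ} (X B : Matrix (Fin m) (Fin n) ℂ) (s : Fin m → ℝ) (t : Fin n → ℝ)
    (hs : ∀ i, 0 < s i) (ht : ∀ j, 0 < t j)
    (h : ∀ (x : Fin m → ℂ) (y : Fin n → ℂ), 2 * (∑ i, ∑ j, B i j * (x i * y j)).re ≤
      ∑ i, s i * ‖x i‖ ^ 2 + ∑ j, t j * ‖y j‖ ^ 2) :
    2 * (∑ i, ∑ j, B i j * X i j).re ≤ schurNorm X * (∑ i, s i + ∑ j, t j) := by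
  set A : Matrix (Fin m) (Fin n) ℂ := fun i j => B i j / (Real.sqrt (s i) * Real.sqrt (t j)) with hAdef
  have hs0 : ∀ i, (Real.sqrt (s i) : ℂ) ≠ 0 := fun i => by
    simpa using (Real.sqrt_pos.2 (hs i)).ne'
  have ht0 : ∀ i, (Real.sqrt (t i) : ℂ) ≠ 0 := fun i => by
    simpa using (Real.sqrt_pos.2 (ht i)).ne'
  have hA : opNorm A ≤ 1 := by
    refine ContinuousLinearMap.opNorm_le_bound _ zero_le_one fun v => ?_
    change ‖Matrix.toEuclideanLin A v‖ ≤ _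
    set w := Matrix.toEuclideanLin A v with hw
    have h1 := h (fun i => star (w i) / Real.sqrt (s i)) (fun j => v j / Real.sqrt (t j))
    have e1 : ∑ i, ∑ j, B i j * (star (w i) / Real.sqrt (s i) * (v j / Real.sqrt (t j)))
        = inner ℂ w (Matrix.toEuclideanLin A v) := by
      rw [inner_toLin]
      refine Finset.sum_congr rfl fun i _ => Finset.sum_congr rfl fun j _ => ?_
      have := hs0 i
      have := ht0 j
      simp only [hAdef]
      field_simp
    have e2 : ∑ i, s i * ‖star (w i) / (Real.sqrt (s i) : ℂ)‖ ^ 2 = ‖w‖ ^ 2 := by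
      rw [EuclideanSpace.norm_sq_eq]
      refine Finset.sum_congr rfl fun i _ => ?_
      have := hs i
      rw [norm_div, norm_star, div_pow, Complex.norm_real, Real.norm_eq_abs, sq_abs, Real.sq_sqrt this.le]
      field_simp
    have e3 : ∑ i, t i * ‖v i / (Real.sqrt (t i) : ℂ)‖ ^ 2 = ‖v‖ ^ 2 := by
      rw [EuclideanSpace.norm_sq_eq]
      refine Finset.sum_congr rfl fun i _ => ?_
      have := ht i
      rw [norm_div, div_pow, Complex.norm_real, Real.norm_eq_abs, sq_abs, Real.sq_sqrt this.le]
      field_simp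
    rw [e1, e2, e3, ← hw] at h1
    have e4 : (inner ℂ w w).re = ‖w‖ ^ 2 := by
      have := inner_self_eq_norm_sq (𝕜 := ℂ) w
      simpa using this
    rw [e4] at h1
    rw [one_mul]
    exact (abs_le_of_sq_le_sq' (by linarith) (norm_nonneg _)).2
  set u : EuclideanSpace ℂ (Fin m) := WithLp.toLp 2 fun i => (Real.sqrt (s i) : ℂ) with hu
  set v : EuclideanSpace ℂ (Fin n) := WithLp.toLp 2 fun i => (Real.sqrt (t i) : ℂ) with hv
  have h2 := inner_le_opNorm (Matrix.hadamard X A) u v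
  have e : ∑ i, ∑ j, B i j * X i j = inner ℂ u (Matrix.toEuclideanLin (Matrix.hadamard X A) v) := by
    rw [inner_toLin]
    refine Finset.sum_congr rfl fun i _ => Finset.sum_congr rfl fun j _ => ?_
    have := hs0 i
    have := ht0 j
    rw [Matrix.hadamard_apply]
    simp only [hAdef, hu, hv]
    simp
    field_simp
  have eu : ‖u‖ ^ 2 = ∑ i, s i := by
    rw [EuclideanSpace.norm_sq_eq]
    refine Finset.sum_congr rfl fun i _ => ?_
    simp [hu, Real.sq_sqrt (hs i).le]
  have ev : ‖v‖ ^ 2 = ∑ i, t i := by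
    rw [EuclideanSpace.norm_sq_eq]
    refine Finset.sum_congr rfl fun i _ => ?_
    simp [hv, Real.sq_sqrt (ht i).le]
  rw [e, ← eu, ← ev]
  have h3 := Complex.re_le_norm (inner ℂ u (Matrix.toEuclideanLin (Matrix.hadamard X A) v))
  have h4 := mul_le_mul_of_nonneg_right (le_schur X A hA) (mul_nonneg (norm_nonneg u) (norm_nonneg v))
  nlinarith [mul_nonneg (schur_nonneg X) (sq_nonneg (‖u‖ - ‖v‖))]
lemma colNorm_le {l m : ℕ} (L : Matrix (Fin l) (Fin m) ℂ) (c : ℝ) (h : ∀ j, ∑ i, ‖L i j‖ ^ 2 ≤ c) :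
    colNorm L ≤ Real.sqrt c :=
  Real.iSup_le (fun j => Real.sqrt_le_sqrt (h j)) (Real.sqrt_nonneg _)

open scoped ComplexOrder in
/-- rank reduction -/
lemma reduce {m n : ℕ} {E : Type*} [NormedAddCommGroup E] [InnerProductSpace ℂ E] [FiniteDimensional ℂ E]
    (X : Matrix (Fin m) (Fin n) ℂ) (l : Fin m → E) (r : Fin n → E)
    (hX : ∀ i j, X i j = inner ℂ (l i) (r j)) :
    ∃ (L : Matrix (Fin X.rank) (Fin m) ℂ) (R : Matrix (Fin X.rank) (Fin n) ℂ),
      X = Lᴴ * R ∧ (∀ i, ∑ k, ‖L k i‖ ^ 2 ≤ ‖l i‖ ^ 2) ∧ (∀ j, ∑ k, ‖R k j‖ ^ 2 ≤ ‖r j‖ ^ 2) := by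
  set V := Submodule.span ℂ (Set.range r) with hV
  set pl : Fin m → E := fun i => V.starProjection (l i) with hpl
  set W := Submodule.span ℂ (Set.range pl) with hW
  have hWV : W ≤ V := by
    rw [hW, Submodule.span_le]
    rintro _ ⟨i, rfl⟩
    exact Submodule.starProjection_apply_mem _ _
  have hrV : ∀ j, r j ∈ V := fun j => Submodule.subset_span ⟨j, rfl⟩
  have hplW : ∀ i, pl i ∈ W := fun j => Submodule.subset_span ⟨j, rfl⟩
  have hplr : ∀ i, ∀ v ∈ V, inner ℂ (pl i) v = inner ℂ (l i) v := fun i v hv => by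
    simp only [hpl]
    rw [Submodule.inner_starProjection_left_eq_right, Submodule.starProjection_eq_self_iff.2 hv]
  let T : E →ₗ[ℂ] (Fin n → ℂ) := LinearMap.pi fun j => (innerSL ℂ (r j)).toLinearMap
  have hT : ∀ w j, T w j = inner ℂ (r j) w := fun w j => rfl
  have hinj : Function.Injective (T.domRestrict W) := by
    rw [← LinearMap.ker_eq_bot, LinearMap.ker_eq_bot']
    rintro ⟨w, hw⟩ h0
    have h1 : ∀ j, inner ℂ (r j) w = 0 := fun j => by
      have := congrFun h0 j
      exact this
    have h2 : ∀ v ∈ V, inner ℂ v w = 0 := by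
      intro v hv
      induction hv using Submodule.span_induction with
      | mem x hx => obtain ⟨j, rfl⟩ := hx; exact h1 j
      | zero => simp
      | add x y _ _ hx hy => rw [inner_add_left, hx, hy, add_zero]
      | smul a x _ hx => rw [inner_smul_left, hx, mul_zero]
    have := h2 w (hWV hw)
    simpa using this
  have hrank : Module.finrank ℂ W = X.rank := by
    rw [← LinearMap.finrank_range_of_inj hinj, LinearMap.range_domRestrict, hW, Submodule.map_span,
      ← Matrix.rank_conjTranspose, Matrix.rank_eq_finrank_span_cols]
    rw [← Set.range_comp]
    have : (T ∘ pl) = Xᴴ.col := ?_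
    · rw [this]
    funext i j
    simp only [Function.comp, hT, Matrix.col_apply, Matrix.conjTranspose_apply, hX]
    rw [← hplr i _ (hrV j)]
    simp
  let e := (stdOrthonormalBasis ℂ W).reindex (finCongr hrank)
  have hon : Orthonormal ℂ (fun k => (e k : E)) := e.orthonormal.comp_linearIsometry W.subtypeₗᵢ
  refine ⟨Matrix.of fun k i => inner ℂ (e k : E) (l i), Matrix.of fun k j => inner ℂ (e k : E) (r j), ?_, ?_, ?_⟩
  · ext i j
    rw [hX, ← hplr i _ (hrV j), Matrix.mul_apply]
    have h1 : inner ℂ (pl i) (r j) = inner ℂ (⟨pl i, hplW i⟩ : W) (W.orthogonalProjectionOnto (r j)) := by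
      rw [Submodule.inner_orthogonalProjectionOnto_eq_of_mem_left]
    rw [h1, ← e.sum_inner_mul_inner]
    refine Finset.sum_congr rfl fun k _ => ?_
    rw [Matrix.conjTranspose_apply, Submodule.inner_orthogonalProjectionOnto_eq_of_mem_left]
    congr 1
    change inner ℂ (pl i) (e k : E) = star (inner ℂ (e k : E) (l i))
    rw [hplr i _ (hWV (e k).2)]
    simp
  · intro i
    exact hon.sum_inner_products_le _
  · intro i
    exact hon.sum_inner_products_le _

open scoped ComplexOrder MatrixOrder in
lemma gram_of_psd {ι : Type*} [Fintype ι] [DecidableEq ι] (Z : Matrix ι ι ℂ) (hZ : Z.PosSemidef) :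
    ∃ B : Matrix ι ι ℂ, Z = Bᴴ * B := by
  obtain ⟨B, hB⟩ := CStarAlgebra.nonneg_iff_eq_star_mul_self.1 hZ.nonneg
  exact ⟨B, hB⟩

open scoped ComplexOrder in
lemma gram_comb {ι : Type*} [Fintype ι] [DecidableEq ι] (B₁ B₂ : Matrix ι ι ℂ) (a b : ℝ)
    (ha : 0 ≤ a) (hb : 0 ≤ b) :
    ∃ B : Matrix ι ι ℂ, Bᴴ * B = (a : ℂ) • (B₁ᴴ * B₁) + (b : ℂ) • (B₂ᴴ * B₂) := by
  have h : ((a : ℂ) • (B₁ᴴ * B₁) + (b : ℂ) • (B₂ᴴ * B₂)).PosSemidef :=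
    ((Matrix.posSemidef_conjTranspose_mul_self B₁).smul (by exact_mod_cast ha)).add
      ((Matrix.posSemidef_conjTranspose_mul_self B₂).smul (by exact_mod_cast hb))
  obtain ⟨B, hB⟩ := gram_of_psd _ h
  exact ⟨B, hB.symm⟩

open scoped ComplexOrder in
lemma gram_rank_one {ι : Type*} [Fintype ι] [DecidableEq ι] (w : ι → ℂ) :
    ∃ B : Matrix ι ι ℂ, ∀ k k', (Bᴴ * B) k k' = star (w k) * w k' := by
  obtain ⟨B, hB⟩ := gram_of_psd _ (Matrix.posSemidef_vecMulVec_star_self w)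
  refine ⟨B, fun k k' => ?_⟩
  rw [← hB]
  rfl

/-- The cone of (off-diagonal block, diagonal bounds) coming from Gram matrices. -/
def gramCone (m n : ℕ) : Set ((Fin m × Fin n → ℂ) × (Fin m ⊕ Fin n → ℂ)) :=
  {z | ∃ B : Matrix (Fin m ⊕ Fin n) (Fin m ⊕ Fin n) ℂ,
    (∀ i j, (Bᴴ * B) (Sum.inl i) (Sum.inr j) = z.1 (i, j)) ∧
    ∀ k, ((Bᴴ * B) k k).re ≤ (z.2 k).re}

lemma gram_diag {ι : Type*} [Fintype ι] (B : Matrix ι ι ℂ) (k : ι) :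
    ((Bᴴ * B) k k).re = ∑ l, ‖B l k‖ ^ 2 := by
  rw [Matrix.mul_apply, Complex.re_sum]
  refine Finset.sum_congr rfl fun l _ => ?_
  rw [Matrix.conjTranspose_apply, Complex.sq_norm, Complex.normSq_apply]
  simp

lemma gramCone_comb {m n : ℕ} {z₁ z₂ : (Fin m × Fin n → ℂ) × (Fin m ⊕ Fin n → ℂ)}
    (h₁ : z₁ ∈ gramCone m n) (h₂ : z₂ ∈ gramCone m n) {a b : ℝ} (ha : 0 ≤ a) (hb : 0 ≤ b) :
    a • z₁ + b • z₂ ∈ gramCone m n := by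
  obtain ⟨B₁, h₁, h₁'⟩ := h₁
  obtain ⟨B₂, h₂, h₂'⟩ := h₂
  obtain ⟨B, hB⟩ := gram_comb B₁ B₂ a b ha hb
  refine ⟨B, fun i j => ?_, fun k => ?_⟩
  · rw [hB]
    simp [h₁, h₂]
  · rw [hB]
    simp
    exact add_le_add (mul_le_mul_of_nonneg_left (h₁' k) ha) (mul_le_mul_of_nonneg_left (h₂' k) hb)

lemma gramCone_closed (m n : ℕ) : IsClosed (gramCone m n) := by
  refine IsSeqClosed.isClosed ?_
  intro z z₀ hz hlim
  choose B hB hB' using hz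
  obtain ⟨M, hM⟩ := (Metric.isBounded_range_of_tendsto z hlim).exists_norm_le
  let B' : ℕ → (Fin m ⊕ Fin n → Fin m ⊕ Fin n → ℂ) := fun k => B k
  have hM0 : 0 ≤ M := (norm_nonneg _).trans (hM (z 0) ⟨0, rfl⟩)
  have hbd : ∀ k, B' k ∈ Metric.closedBall (0 : Fin m ⊕ Fin n → Fin m ⊕ Fin n → ℂ) (M + 1) := by
    intro k
    rw [mem_closedBall_zero_iff]
    refine (pi_norm_le_iff_of_nonneg (by linarith)).2 fun l => (pi_norm_le_iff_of_nonneg (by linarith)).2 fun i => ?_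
    have h1 := hB' k i
    rw [gram_diag] at h1
    have h2 : ‖B k l i‖ ^ 2 ≤ ∑ l, ‖B k l i‖ ^ 2 :=
      Finset.single_le_sum (f := fun l => ‖B k l i‖ ^ 2) (fun _ _ => by positivity) (Finset.mem_univ l)
    have h3 : ((z k).2 i).re ≤ M :=
      (Complex.re_le_norm _).trans ((norm_le_pi_norm _ i).trans ((norm_snd_le _).trans (hM (z k) ⟨k, rfl⟩)))
    change ‖B k l i‖ ≤ M + 1
    nlinarith [sq_nonneg (‖B k l i‖ - 1), norm_nonneg (B k l i)]
  obtain ⟨B₀, -, φ, hφ, hconv⟩ := tendsto_subseq_of_bounded Metric.isBounded_closedBall hbd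
  have hc : ∀ l i, Filter.Tendsto (fun k => B (φ k) l i) Filter.atTop (nhds (B₀ l i)) := fun l i =>
    tendsto_pi_nhds.1 (tendsto_pi_nhds.1 hconv l) i
  have hg : ∀ i j, Filter.Tendsto (fun k => ((B (φ k))ᴴ * B (φ k)) i j) Filter.atTop
      (nhds (((Matrix.of B₀)ᴴ * Matrix.of B₀) i j)) := fun i j => by
    simp only [Matrix.mul_apply, Matrix.conjTranspose_apply]
    exact tendsto_finsetSum _ fun l _ => ((hc l i).star).mul (hc l j)
  have hlim' := hlim.comp hφ.tendsto_atTop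
  have hz1 : ∀ p, Filter.Tendsto (fun k => (z (φ k)).1 p) Filter.atTop (nhds (z₀.1 p)) := fun p =>
    tendsto_pi_nhds.1 ((continuous_fst.tendsto _).comp hlim') p
  have hz2 : ∀ p, Filter.Tendsto (fun k => (z (φ k)).2 p) Filter.atTop (nhds (z₀.2 p)) := fun p =>
    tendsto_pi_nhds.1 ((continuous_snd.tendsto _).comp hlim') p
  refine ⟨Matrix.of B₀, fun i j => ?_, fun k => ?_⟩
  · refine tendsto_nhds_unique (hg _ _) ?_
    simp only [hB]
    exact hz1 _
  · exact le_of_tendsto_of_tendsto' ((Complex.continuous_re.tendsto _).comp (hg k k))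
      ((Complex.continuous_re.tendsto _).comp (hz2 k)) fun a => hB' (φ a) k

lemma target_mem {m n : ℕ} (X : Matrix (Fin m) (Fin n) ℂ) :
    ((fun p => X p.1 p.2, fun _ => (schurNorm X : ℂ)) :
      (Fin m × Fin n → ℂ) × (Fin m ⊕ Fin n → ℂ)) ∈ gramCone m n := by
  by_contra hx
  have hconv : Convex ℝ (gramCone m n) := fun z₁ h₁ z₂ h₂ a b ha hb _ => gramCone_comb h₁ h₂ ha hb
  obtain ⟨f, u, hfx, hfu⟩ := RCLike.geometric_hahn_banach_point_closed (𝕜 := ℂ) hconv (gramCone_closed m n) hx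
  have h0mem : (0 : (Fin m × Fin n → ℂ) × (Fin m ⊕ Fin n → ℂ)) ∈ gramCone m n :=
    ⟨0, by simp, by simp⟩
  have hu0 : u < 0 := by simpa using hfu 0 h0mem
  have hpos : ∀ z ∈ gramCone m n, 0 ≤ (f z).re := by
    intro z hz
    by_contra hneg
    push Not at hneg
    have ht : 0 ≤ u / (f z).re := div_nonneg_of_nonpos hu0.le hneg.le
    have := hfu _ (gramCone_comb hz h0mem ht le_rfl)
    simp only [smul_zero, add_zero] at this
    rw [← Complex.coe_smul, map_smul] at this
    simp only [smul_eq_mul, RCLike.re_eq_complex_re, Complex.re_ofReal_mul] at this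
    rw [div_mul_cancel₀ _ hneg.ne] at this
    exact lt_irrefl _ this
  set b : Fin m → Fin n → ℂ := fun i j => f (Pi.single (i, j) 1, 0) with hb
  set s : Fin m ⊕ Fin n → ℝ := fun k => (f (0, Pi.single k 1)).re with hs
  have hf : ∀ (Y : Fin m × Fin n → ℂ) (p : Fin m ⊕ Fin n → ℝ),
      (f (Y, fun k => (p k : ℂ))).re = (∑ i, ∑ j, b i j * Y (i, j)).re + ∑ k, s k * p k := by
    intro Y p
    have e : ((Y, fun k => (p k : ℂ)) : (Fin m × Fin n → ℂ) × (Fin m ⊕ Fin n → ℂ)) =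
        ∑ q, Y q • ((Pi.single q 1, 0) : (Fin m × Fin n → ℂ) × (Fin m ⊕ Fin n → ℂ)) +
        ∑ k, (p k : ℂ) • ((0, Pi.single k 1) : (Fin m × Fin n → ℂ) × (Fin m ⊕ Fin n → ℂ)) := by
      ext q
      · simp [Prod.fst_sum, Finset.sum_apply, Pi.single_apply]
      · rcases q with q | q <;> simp [Prod.snd_sum, Finset.sum_apply, Pi.single_apply]
    rw [e, map_add, map_sum, map_sum, Complex.add_re]
    congr 1
    · rw [Fintype.sum_prod_type]
      simp only [map_smul, smul_eq_mul, hb, mul_comm]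
    · rw [Complex.re_sum]
      refine Finset.sum_congr rfl fun k _ => ?_
      rw [map_smul, smul_eq_mul, Complex.re_ofReal_mul, mul_comm]
  have hs0 : ∀ k, 0 ≤ s k := fun k => by
    refine hpos _ ⟨0, by simp, fun k' => ?_⟩
    by_cases h : k' = k
    · subst h; simp
    · simp [h]
  have hmain : ∀ (x : Fin m → ℂ) (y : Fin n → ℂ), 0 ≤ (∑ i, ∑ j, b i j * (x i * y j)).re +
      (∑ i, s (Sum.inl i) * ‖x i‖ ^ 2 + ∑ j, s (Sum.inr j) * ‖y j‖ ^ 2) := by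
    intro x y
    let w : Fin m ⊕ Fin n → ℂ := Sum.elim (fun i => star (x i)) y
    obtain ⟨B, hB⟩ := gram_rank_one w
    have h1 := hpos (fun p => x p.1 * y p.2, fun k => ((‖w k‖ ^ 2 : ℝ) : ℂ)) ⟨B, fun i j => ?_, fun k => ?_⟩
    · rw [hf, Fintype.sum_sum_type] at h1
      simpa [w] using h1
    · rw [hB]; simp [w]
    · rw [hB, Complex.ofReal_re, Complex.sq_norm, Complex.normSq_apply]
      simp
  have hC := schur_nonneg X
  have hlt : (f (fun p => X p.1 p.2, fun _ => (schurNorm X : ℂ))).re < 0 := lt_trans hfx hu0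
  rw [hf, Fintype.sum_sum_type, ← Finset.sum_mul, ← Finset.sum_mul] at hlt
  simp only at hlt
  have hdual : ∀ ε : ℝ, 0 < ε → -(∑ i, ∑ j, b i j * X i j).re ≤
      schurNorm X * (∑ i, (s (Sum.inl i) + ε) + ∑ j, (s (Sum.inr j) + ε)) := by
    intro ε hε
    have hneg : ∀ Y : Fin m → Fin n → ℂ, 2 * (∑ i, ∑ j, (Matrix.of fun i j => -(b i j) / 2) i j * Y i j).re
        = -(∑ i, ∑ j, b i j * Y i j).re := by
      intro Y
      have : ∑ i, ∑ j, (Matrix.of fun i j => -(b i j) / 2) i j * Y i j =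
          ((-1 / 2 : ℝ) : ℂ) * ∑ i, ∑ j, b i j * Y i j := by
        simp only [Finset.mul_sum, Matrix.of_apply]
        refine Finset.sum_congr rfl fun i _ => Finset.sum_congr rfl fun j _ => ?_
        push_cast
        ring
      rw [this, Complex.re_ofReal_mul]
      ring
    have := dual_est X (Matrix.of fun i j => -(b i j) / 2) (fun i => s (Sum.inl i) + ε)
      (fun j => s (Sum.inr j) + ε) (fun i => by have := hs0 (Sum.inl i); linarith)
      (fun i => by have := hs0 (Sum.inr i); linarith) ?_
    · exact (hneg fun i j => X i j).symm.le.trans this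
    · intro x y
      rw [hneg fun i j => x i * y j]
      have h1 := hmain x y
      have h2 : ∑ i, s (Sum.inl i) * ‖x i‖ ^ 2 ≤ ∑ i, (s (Sum.inl i) + ε) * ‖x i‖ ^ 2 :=
        Finset.sum_le_sum fun i _ => mul_le_mul_of_nonneg_right (by linarith) (by positivity)
      have h3 : ∑ i, s (Sum.inr i) * ‖y i‖ ^ 2 ≤ ∑ i, (s (Sum.inr i) + ε) * ‖y i‖ ^ 2 :=
        Finset.sum_le_sum fun i _ => mul_le_mul_of_nonneg_right (by linarith) (by positivity)
      linarith
  simp only [Finset.sum_add_distrib, Finset.sum_const, Finset.card_univ, Fintype.card_fin, nsmul_eq_mul] at hdual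
  set K := (∑ i, ∑ j, b i j * X i j).re
  set S₁ := ∑ i, s (Sum.inl i)
  set S₂ := ∑ i, s (Sum.inr i)
  set C := schurNorm X
  have hden : 0 < C * (m + n) + 1 := by positivity
  set δ := -(K + (S₁ * C + S₂ * C)) with hδ
  have hδ0 : 0 < δ := by linarith
  have h1 := hdual (δ / (C * (m + n) + 1)) (by positivity)
  have h2 : δ / (C * (m + n) + 1) * (C * (m + n) + 1) = δ := div_mul_cancel₀ _ hden.ne'
  have h3 : 0 < δ / (C * (m + n) + 1) := by positivity
  nlinarith

/-- Norm optimal factorization of a Schur multiplier: `X = Lᴴ * R` with `L`, `R` of the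
same rank as `X` and `‖L‖_c ‖R‖_c = ‖S_X‖`. -/
theorem exists_schur_optimal_factorization
    (m n : ℕ) (X : Matrix (Fin m) (Fin n) ℂ) :
    ∃ (L : Matrix (Fin X.rank) (Fin m) ℂ) (R : Matrix (Fin X.rank) (Fin n) ℂ),
      L.rank = X.rank ∧ R.rank = X.rank ∧ X = Lᴴ * R ∧
      colNorm L * colNorm R = schurNorm X := by
  obtain ⟨B, hB, hB'⟩ := target_mem X
  have hcol : ∀ k, ‖(WithLp.toLp 2 (fun l => B l k) : EuclideanSpace ℂ (Fin m ⊕ Fin n))‖ ^ 2 ≤ schurNorm X := by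
    intro k
    rw [EuclideanSpace.norm_sq_eq, ← gram_diag]
    exact hB' k
  obtain ⟨L, R, hX, hL, hR⟩ := reduce X
    (fun i => (WithLp.toLp 2 (fun l => B l (Sum.inl i)) : EuclideanSpace ℂ (Fin m ⊕ Fin n)))
    (fun j => (WithLp.toLp 2 (fun l => B l (Sum.inr j)) : EuclideanSpace ℂ (Fin m ⊕ Fin n)))
    (fun i j => by
      refine (hB i j).symm.trans ?_
      rw [Matrix.mul_apply, PiLp.inner_apply]
      refine Finset.sum_congr rfl fun l _ => ?_
      simp [mul_comm])
  refine ⟨L, R, ?_, ?_, hX, le_antisymm ?_ ?_⟩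
  · refine le_antisymm ((Matrix.rank_le_card_height L).trans (by simp)) ?_
    have h := Matrix.rank_mul_le_left Lᴴ R
    rw [← hX] at h
    open scoped ComplexOrder in
    rwa [Matrix.rank_conjTranspose] at h
  · refine le_antisymm ((Matrix.rank_le_card_height R).trans (by simp)) ?_
    have h := Matrix.rank_mul_le_right Lᴴ R
    rwa [← hX] at h
  · have h1 := colNorm_le L _ fun i => (hL i).trans (hcol _)
    have h2 := colNorm_le R _ fun i => (hR i).trans (hcol _)
    refine (mul_le_mul h1 h2 (colNorm_nonneg _) (Real.sqrt_nonneg _)).trans ?_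
    rw [Real.mul_self_sqrt (schur_nonneg X)]
  · have := schur_le L R
    rwa [← hX] at this
end

section
/- Let X be an m×n complex matrix of rank r. Then there exist a vector γ ∈ ℂᵐ, an r×m complex matrix L, and an r×n complex matrix R, with L and R both of rank r, such that X = Δ_m(γ) Lᴴ R and ‖γ‖₂ · ‖L‖_c · ‖R‖_c = ‖T_X‖. -/
open Matrix BigOperators

/-- The Euclidean norm of a complex vector. -/
noncomputable def eNorm {n : ℕ} (ξ : Fin n → ℂ) : ℝ :=
  Real.sqrt (∑ j, ‖ξ j‖ ^ 2)

/-- The norm of the bilinear map `T_X : (a, B) ↦ (∑_i a_i X_{ij} B_{ij})_j`, the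
supremum over `max_i |a_i| ≤ 1` and `‖B‖_∞ ≤ 1` of `‖T_X(a,B)‖₂`. -/
noncomputable def TxNorm {m n : ℕ} (X : Matrix (Fin m) (Fin n) ℂ) : ℝ :=
  ⨆ p : {p : (Fin m → ℂ) × Matrix (Fin m) (Fin n) ℂ //
      (∀ i, ‖p.1 i‖ ≤ 1) ∧ opNorm p.2 ≤ 1},
    eNorm (fun j => ∑ i, p.1.1 i * X i j * p.1.2 i j)


namespace TxAux

noncomputable def nsq {k : ℕ} (v : Fin k → ℂ) : ℝ := ∑ i, ‖v i‖ ^ 2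

lemma nsq_nonneg {k : ℕ} (v : Fin k → ℂ) : 0 ≤ nsq v :=
  Finset.sum_nonneg fun i _ => by positivity

lemma nsq_eq_norm {k : ℕ} (v : Fin k → ℂ) : nsq v = ‖WithLp.toLp 2 v‖ ^ 2 := by
  rw [EuclideanSpace.norm_sq_eq]; rfl

lemma dot_self {k : ℕ} (v : Fin k → ℂ) : star v ⬝ᵥ v = (nsq v : ℂ) := by
  simp only [dotProduct, nsq, Pi.star_apply, Complex.ofReal_sum]
  refine Finset.sum_congr rfl fun i _ => ?_
  push_cast
  rw [← Complex.conj_mul']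
  rfl

def Contr {m n : ℕ} (A : Matrix (Fin m) (Fin n) ℂ) : Prop := ∀ v, nsq (A *ᵥ v) ≤ nsq v

lemma contr_iff {m n : ℕ} (A : Matrix (Fin m) (Fin n) ℂ) : Contr A ↔ opNorm A ≤ 1 := by
  constructor
  · intro h
    refine ContinuousLinearMap.opNorm_le_bound _ zero_le_one fun v => ?_
    have := h v.ofLp
    rw [nsq_eq_norm, nsq_eq_norm] at this
    rw [one_mul]
    exact (pow_le_pow_iff_left₀ (norm_nonneg _) (norm_nonneg _) two_ne_zero).1 this
  · intro h v
    rw [nsq_eq_norm, nsq_eq_norm]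
    have := ContinuousLinearMap.le_of_opNorm_le _ h (WithLp.toLp 2 v)
    rw [one_mul] at this
    exact pow_le_pow_left₀ (norm_nonneg _) this 2

open scoped Matrix.Norms.L2Operator in
lemma contr_conjTranspose {m n : ℕ} {A : Matrix (Fin m) (Fin n) ℂ} (h : Contr A) :
    Contr Aᴴ := by
  rw [contr_iff] at h ⊢
  have h1 : ‖A‖ ≤ 1 := h
  rw [← Matrix.l2_opNorm_conjTranspose] at h1
  exact h1

lemma nsq_star {k : ℕ} (v : Fin k → ℂ) : nsq (star v) = nsq v := by
  simp [nsq]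

lemma contr_transpose {m n : ℕ} {A : Matrix (Fin m) (Fin n) ℂ} (h : Contr A) :
    Contr Aᵀ := by
  intro v
  have := contr_conjTranspose h (star v)
  rw [nsq_star] at this
  rw [← nsq_star]
  convert this using 2
  rw [Matrix.star_mulVec]
  ext i
  simp [Matrix.mulVec, Matrix.vecMul, dotProduct, mul_comm]

lemma col_le {l m : ℕ} (L : Matrix (Fin l) (Fin m) ℂ) (j : Fin m) :
    ∑ i, ‖L i j‖ ^ 2 ≤ colNorm L ^ 2 := by
  have h : Real.sqrt (∑ i, ‖L i j‖ ^ 2) ≤ colNorm L :=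
    le_ciSup (f := fun j => Real.sqrt (∑ i, ‖L i j‖ ^ 2)) (Set.finite_range _).bddAbove j
  exact Real.sqrt_le_iff.1 h |>.2

lemma colNorm_nonneg {l m : ℕ} (L : Matrix (Fin l) (Fin m) ℂ) : 0 ≤ colNorm L :=
  Real.iSup_nonneg fun _ => Real.sqrt_nonneg _

lemma colNorm_le {l m : ℕ} (L : Matrix (Fin l) (Fin m) ℂ) {c : ℝ}
    (h : ∀ j, ∑ i, ‖L i j‖ ^ 2 ≤ c) : colNorm L ≤ Real.sqrt c :=
  Real.iSup_le (fun j => Real.sqrt_le_sqrt (h j)) (Real.sqrt_nonneg _)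

lemma cs {k : ℕ} (f g : Fin k → ℂ) : ‖∑ i, f i * g i‖ ^ 2 ≤ nsq f * nsq g := by
  have h1 : ‖∑ i, f i * g i‖ ≤ ∑ i, ‖f i‖ * ‖g i‖ :=
    (norm_sum_le _ _).trans (by simp)
  calc _ ≤ (∑ i, ‖f i‖ * ‖g i‖) ^ 2 := pow_le_pow_left₀ (norm_nonneg _) h1 2
    _ ≤ _ := Finset.sum_mul_sq_le_sq_mul_sq _ _ _

lemma upper {r m n : ℕ} (γ : Fin m → ℂ) (L : Matrix (Fin r) (Fin m) ℂ)
    (R : Matrix (Fin r) (Fin n) ℂ) (X : Matrix (Fin m) (Fin n) ℂ)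
    (hX : X = Matrix.diagonal γ * (Lᴴ * R)) (a : Fin m → ℂ) (B : Matrix (Fin m) (Fin n) ℂ)
    (ha : ∀ i, ‖a i‖ ≤ 1) (hB : opNorm B ≤ 1) :
    eNorm (fun j => ∑ i, a i * X i j * B i j) ≤ eNorm γ * colNorm L * colNorm R := by
  have hBt := contr_transpose ((contr_iff B).2 hB)
  have key : ∑ j, ‖∑ i, a i * X i j * B i j‖ ^ 2 ≤ (eNorm γ * colNorm L * colNorm R) ^ 2 := by
    have e : ∀ j, ∑ i, a i * X i j * B i j =
        ∑ k, R k j * (Bᵀ *ᵥ (fun i => a i * γ i * star (L k i))) j := by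
      intro j
      rw [hX]
      simp only [diagonal_mul]
      simp only [Matrix.mul_apply, conjTranspose_apply, mulVec, dotProduct,
        transpose_apply, Finset.mul_sum, Finset.sum_mul]
      rw [Finset.sum_comm]
      refine Finset.sum_congr rfl fun k _ => Finset.sum_congr rfl fun i _ => ?_
      ring
    have hg : eNorm γ ^ 2 = ∑ i, ‖γ i‖ ^ 2 := Real.sq_sqrt (nsq_nonneg γ)
    calc ∑ j, ‖∑ i, a i * X i j * B i j‖ ^ 2
        ≤ ∑ j, colNorm R ^ 2 *
          ∑ k, ‖(Bᵀ *ᵥ (fun i => a i * γ i * star (L k i))) j‖ ^ 2 := by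
          refine Finset.sum_le_sum fun j _ => ?_
          rw [e]
          refine (cs (fun k => R k j) _).trans ?_
          exact mul_le_mul_of_nonneg_right (col_le R j) (nsq_nonneg _)
      _ = colNorm R ^ 2 * ∑ k, nsq (Bᵀ *ᵥ (fun i => a i * γ i * star (L k i))) := by
          rw [← Finset.mul_sum, Finset.sum_comm]; rfl
      _ ≤ colNorm R ^ 2 * ∑ k, ∑ i, ‖γ i‖ ^ 2 * ‖L k i‖ ^ 2 := by
          refine mul_le_mul_of_nonneg_left (Finset.sum_le_sum fun k _ => ?_) (sq_nonneg _)
          refine (hBt _).trans (Finset.sum_le_sum fun i _ => ?_)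
          rw [norm_mul, norm_mul, norm_star, ← mul_pow]
          refine pow_le_pow_left₀ (by positivity) ?_ 2
          refine mul_le_mul_of_nonneg_right ?_ (norm_nonneg _)
          exact mul_le_of_le_one_left (norm_nonneg _) (ha i)
      _ = colNorm R ^ 2 * ∑ i, ‖γ i‖ ^ 2 * ∑ k, ‖L k i‖ ^ 2 := by
          rw [Finset.sum_comm]; simp only [Finset.mul_sum]
      _ ≤ colNorm R ^ 2 * ∑ i, ‖γ i‖ ^ 2 * colNorm L ^ 2 := by
          refine mul_le_mul_of_nonneg_left (Finset.sum_le_sum fun k _ => ?_) (sq_nonneg _)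
          exact mul_le_mul_of_nonneg_left (col_le L k) (sq_nonneg _)
      _ = _ := by rw [← Finset.sum_mul, ← hg]; ring
  refine Real.sqrt_le_iff.2 ⟨?_, key⟩
  exact mul_nonneg (mul_nonneg (Real.sqrt_nonneg _) (colNorm_nonneg _)) (colNorm_nonneg _)

lemma Tx_bdd {m n : ℕ} (X : Matrix (Fin m) (Fin n) ℂ) :
    BddAbove (Set.range fun p : {p : (Fin m → ℂ) × Matrix (Fin m) (Fin n) ℂ //
      (∀ i, ‖p.1 i‖ ≤ 1) ∧ opNorm p.2 ≤ 1} =>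
    eNorm (fun j => ∑ i, p.1.1 i * X i j * p.1.2 i j)) := by
  refine ⟨eNorm (fun _ : Fin m => (1 : ℂ)) * colNorm (1 : Matrix (Fin m) (Fin m) ℂ) *
    colNorm X, ?_⟩
  rintro _ ⟨⟨⟨a, B⟩, ha, hB⟩, rfl⟩
  exact upper _ _ _ X (by simp) a B ha hB

lemma Tx_le {r m n : ℕ} (γ : Fin m → ℂ) (L : Matrix (Fin r) (Fin m) ℂ)
    (R : Matrix (Fin r) (Fin n) ℂ) (X : Matrix (Fin m) (Fin n) ℂ)
    (hX : X = Matrix.diagonal γ * (Lᴴ * R)) :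
    TxNorm X ≤ eNorm γ * colNorm L * colNorm R := by
  refine Real.iSup_le ?_ ?_
  · rintro ⟨⟨a, B⟩, ha, hB⟩
    exact upper _ _ _ X hX a B ha hB
  · exact mul_nonneg (mul_nonneg (Real.sqrt_nonneg _) (colNorm_nonneg _)) (colNorm_nonneg _)

lemma Tx_nonneg {m n : ℕ} (X : Matrix (Fin m) (Fin n) ℂ) : 0 ≤ TxNorm X :=
  Real.iSup_nonneg fun _ => Real.sqrt_nonneg _

/-- test against a contraction and a weight vector -/
lemma le_Tx {m n : ℕ} (X : Matrix (Fin m) (Fin n) ℂ) (C : Matrix (Fin n) (Fin m) ℂ)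
    (hC : Contr C) (η : Fin n → ℂ) (hη : nsq η ≤ 1) :
    ‖(X * diagonal η * C).trace‖ ≤ TxNorm X := by
  have h1 : eNorm (fun j => ∑ i, (1 : ℂ) * X i j * Cᵀ i j) ≤ TxNorm X :=
    le_ciSup (Tx_bdd X) ⟨⟨fun _ => 1, Cᵀ⟩, by simp, (contr_iff _).1 (contr_transpose hC)⟩
  refine le_trans ?_ h1
  refine Real.le_sqrt_of_sq_le ?_
  have e : (X * diagonal η * C).trace = ∑ j, η j * ∑ i, (1 : ℂ) * X i j * Cᵀ i j := by
    simp only [Matrix.trace, diag_apply, Matrix.mul_apply (N := C), mul_diagonal,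
      Finset.mul_sum, transpose_apply]
    rw [Finset.sum_comm]
    refine Finset.sum_congr rfl fun k _ => Finset.sum_congr rfl fun i _ => ?_
    ring
  rw [e]
  refine (cs _ _).trans ?_
  exact mul_le_of_le_one_left (nsq_nonneg _) hη

open scoped ComplexOrder

open scoped MatrixOrder Matrix.Norms.L2Operator in
lemma exists_sqrt {r : ℕ} {M : Matrix (Fin r) (Fin r) ℂ} (hM : M.PosDef) :
    ∃ S : Matrix (Fin r) (Fin r) ℂ, S.PosDef ∧ S * S = M := by
  have h0 : 0 ≤ M := hM.posSemidef.nonneg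
  have h1 : CFC.sqrt M * CFC.sqrt M = M := CFC.sqrt_mul_sqrt_self M h0
  have h2 : (CFC.sqrt M).PosSemidef := (CFC.sqrt_nonneg M).posSemidef
  refine ⟨CFC.sqrt M, ?_, h1⟩
  rw [h2.posDef_iff_isUnit]
  have := hM.isUnit
  rw [← h1] at this
  exact isUnit_of_mul_isUnit_left this

lemma nsq_mulVec {k l : ℕ} (C : Matrix (Fin k) (Fin l) ℂ) (v : Fin l → ℂ) :
    (nsq (C *ᵥ v) : ℂ) = star v ⬝ᵥ ((Cᴴ * C) *ᵥ v) := by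
  rw [← dot_self, Matrix.star_mulVec, ← Matrix.mulVec_mulVec, Matrix.dotProduct_mulVec,
    Matrix.dotProduct_mulVec, Matrix.dotProduct_mulVec]

lemma exists_W {r n : ℕ} (X : Matrix (Fin r) (Fin n) ℂ) (T : ℝ)
    (H : ∀ (C : Matrix (Fin n) (Fin r) ℂ) (η : Fin n → ℂ), Contr C → nsq η ≤ 1 →
      ‖(X * diagonal η * C).trace‖ ≤ T)
    (p : Fin n → ℝ) (hp : ∀ j, 0 ≤ p j) (hs : ∑ j, p j ≤ 1) (e : ℝ) (he : 0 < e) :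
    ∃ W : Matrix (Fin r) (Fin r) ℂ, W.PosDef ∧ W.trace.re ≤ T + e * r ∧
      (W⁻¹ * (X * diagonal (fun j => (p j : ℂ)) * Xᴴ)).trace.re ≤ T := by
  set M := X * diagonal (fun j => (p j : ℂ)) * Xᴴ with hM
  set η : Fin n → ℂ := fun j => ((Real.sqrt (p j) : ℝ) : ℂ) with hη
  set Y := X * diagonal η with hY
  have hYM : Y * Yᴴ = M := by
    rw [hY, hM, conjTranspose_mul, diagonal_conjTranspose, Matrix.mul_assoc, Matrix.mul_assoc,
      ← Matrix.mul_assoc (diagonal η), diagonal_mul_diagonal]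
    congr 3
    ext j
    simp only [hη, Pi.star_apply]
    rw [Complex.star_def, Complex.conj_ofReal, ← Complex.ofReal_mul, Real.mul_self_sqrt (hp j)]
  have hMp : M.PosSemidef := hYM ▸ posSemidef_self_mul_conjTranspose Y
  have hee : (0 : ℂ) < ((e : ℂ) ^ 2) := by
    rw [← Complex.ofReal_pow]; exact Complex.zero_lt_real.2 (by positivity)
  have hMe : (M + ((e : ℂ) ^ 2) • (1 : Matrix (Fin r) (Fin r) ℂ)).PosDef :=
    PosDef.posSemidef_add hMp (PosDef.one.smul hee)
  obtain ⟨S, hS, hSS⟩ := exists_sqrt hMe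
  have hdet : IsUnit S.det := (Matrix.isUnit_iff_isUnit_det S).1 hS.isUnit
  have hSi : S⁻¹.PosDef := hS.inv
  have hSih : (S⁻¹)ᴴ = S⁻¹ := hSi.isHermitian
  have hi1 : S⁻¹ * S = 1 := Matrix.nonsing_inv_mul S hdet
  have hi2 : S * S⁻¹ = 1 := Matrix.mul_nonsing_inv S hdet
  have hMeq : M = S * S - ((e : ℂ) ^ 2) • (1 : Matrix (Fin r) (Fin r) ℂ) := by
    rw [hSS]; abel
  have hMS : M * S⁻¹ = S - ((e : ℂ) ^ 2) • S⁻¹ := by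
    rw [hMeq, sub_mul, Matrix.mul_assoc, hi2, Matrix.mul_one, smul_mul_assoc, Matrix.one_mul]
  have hSMS : S⁻¹ * M * S⁻¹ = 1 - ((e : ℂ) ^ 2) • (S⁻¹ * S⁻¹) := by
    rw [Matrix.mul_assoc, hMS, mul_sub, hi1, mul_smul_comm]
  -- the contraction
  have hC : Contr (Yᴴ * S⁻¹) := by
    intro v
    have h1 : (nsq ((Yᴴ * S⁻¹) *ᵥ v) : ℂ) = nsq v - (e : ℂ) ^ 2 * nsq (S⁻¹ *ᵥ v) := by
      rw [nsq_mulVec, nsq_mulVec, conjTranspose_mul, conjTranspose_conjTranspose, hSih,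
        Matrix.mul_assoc, ← Matrix.mul_assoc Y, hYM, ← Matrix.mul_assoc, hSMS, Matrix.sub_mulVec,
        dotProduct_sub, Matrix.one_mulVec, dot_self, Matrix.smul_mulVec, dotProduct_smul,
        smul_eq_mul]
    have h2 : nsq ((Yᴴ * S⁻¹) *ᵥ v) = nsq v - e ^ 2 * nsq (S⁻¹ *ᵥ v) := by exact_mod_cast h1
    have := nsq_nonneg (S⁻¹ *ᵥ v)
    rw [h2]
    nlinarith [mul_nonneg (sq_nonneg e) this]
  have hη1 : nsq η ≤ 1 := by
    refine le_trans (le_of_eq ?_) hs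
    refine Finset.sum_congr rfl fun j _ => ?_
    simp only [hη, Complex.norm_real, Real.norm_eq_abs, sq_abs]
    exact Real.sq_sqrt (hp j)
  have hT : (M * S⁻¹).trace.re ≤ T := by
    have := H _ η hC hη1
    rw [← Matrix.mul_assoc, ← hY, hYM] at this
    exact (Complex.re_le_norm _).trans this
  refine ⟨S, hS, ?_, ?_⟩
  · -- trace estimates
    set t := S⁻¹.trace.re with ht
    have h1 : (M * S⁻¹).trace.re = S.trace.re - e ^ 2 * t := by
      rw [hMS, trace_sub, trace_smul, Complex.sub_re, smul_eq_mul, ← Complex.ofReal_pow,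
        Complex.re_ofReal_mul]
    have h2 : 0 ≤ (r : ℝ) - e ^ 2 * (S⁻¹ * S⁻¹).trace.re := by
      have h3 : (S⁻¹ * M * S⁻¹).PosSemidef := by
        have := hMp.mul_mul_conjTranspose_same S⁻¹
        rwa [hSih] at this
      have h4 := (Complex.nonneg_iff.1 h3.trace_nonneg).1
      rwa [hSMS, trace_sub, trace_smul, Complex.sub_re, smul_eq_mul, ← Complex.ofReal_pow,
        Complex.re_ofReal_mul, trace_one, Fintype.card_fin, Complex.natCast_re] at h4
    have h5 : 0 ≤ (r : ℝ) - 2 * e * t + e ^ 2 * (S⁻¹ * S⁻¹).trace.re := by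
      have h6 := posSemidef_conjTranspose_mul_self (1 - (e : ℂ) • S⁻¹)
      have h7 := (Complex.nonneg_iff.1 h6.trace_nonneg).1
      have h8 : (1 - (e : ℂ) • S⁻¹)ᴴ * (1 - (e : ℂ) • S⁻¹)
          = 1 - ((2 * e : ℝ) : ℂ) • S⁻¹ + ((e ^ 2 : ℝ) : ℂ) • (S⁻¹ * S⁻¹) := by
        rw [conjTranspose_sub, conjTranspose_smul, hSih, conjTranspose_one, Complex.star_def,
          Complex.conj_ofReal, sub_mul, Matrix.one_mul, mul_sub, Matrix.mul_one,
          smul_mul_smul_comm]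
        push_cast
        module
      rwa [h8, trace_add, trace_sub, trace_smul, trace_smul, Complex.add_re, Complex.sub_re,
        smul_eq_mul, smul_eq_mul, Complex.re_ofReal_mul, Complex.re_ofReal_mul, trace_one,
        Fintype.card_fin, Complex.natCast_re] at h7
    have h9 : e * t ≤ r := by linarith
    nlinarith
  · rwa [Matrix.trace_mul_comm]

lemma complete_sq {r : ℕ} {W : Matrix (Fin r) (Fin r) ℂ} (hW : W.PosDef) (x z : Fin r → ℂ) :
    2 * (star z ⬝ᵥ x).re - (star z ⬝ᵥ (W *ᵥ z)).re ≤ (star x ⬝ᵥ (W⁻¹ *ᵥ x)).re := by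
  have hdet : IsUnit W.det := (Matrix.isUnit_iff_isUnit_det W).1 hW.isUnit
  have hi2 : W * W⁻¹ = 1 := Matrix.mul_nonsing_inv W hdet
  have hi1 : W⁻¹ * W = 1 := Matrix.nonsing_inv_mul W hdet
  have hh : (W⁻¹)ᴴ = W⁻¹ := hW.inv.isHermitian
  have h := (Complex.nonneg_iff.1
    (hW.posSemidef.dotProduct_mulVec_nonneg (z - W⁻¹ *ᵥ x))).1
  have e1 : star (W⁻¹ *ᵥ x) ⬝ᵥ (W *ᵥ z) = star x ⬝ᵥ z := by
    rw [Matrix.star_mulVec, hh, ← Matrix.dotProduct_mulVec, Matrix.mulVec_mulVec, hi1,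
      Matrix.one_mulVec]
  have e2 : star (W⁻¹ *ᵥ x) ⬝ᵥ x = star x ⬝ᵥ (W⁻¹ *ᵥ x) := by
    rw [Matrix.star_mulVec, hh, ← Matrix.dotProduct_mulVec]
  have e3 : (star x ⬝ᵥ z).re = (star z ⬝ᵥ x).re := by
    have : star x ⬝ᵥ z = star (star z ⬝ᵥ x) := by
      rw [Matrix.star_dotProduct]
    rw [this]; simp
  rw [Matrix.mulVec_sub, Matrix.mulVec_mulVec, hi2, Matrix.one_mulVec, star_sub, sub_dotProduct,
    dotProduct_sub, dotProduct_sub, e1, e2] at h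
  simp only [Complex.sub_re] at h
  linarith

lemma trace_eq_sum {r n : ℕ} (X : Matrix (Fin r) (Fin n) ℂ) (V : Matrix (Fin r) (Fin r) ℂ)
    (p : Fin n → ℝ) : (V * (X * diagonal (fun j => (p j : ℂ)) * Xᴴ)).trace.re =
      ∑ j, p j * (star (fun i => X i j) ⬝ᵥ (V *ᵥ fun i => X i j)).re := by
  rw [← Matrix.mul_assoc, Matrix.trace_mul_comm, ← Matrix.mul_assoc, ← Matrix.mul_assoc]
  simp only [Matrix.trace, diag_apply, mul_diagonal, Complex.re_sum]
  refine Finset.sum_congr rfl fun j _ => ?_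
  rw [mul_comm, Complex.re_ofReal_mul]
  congr 2
  rw [Matrix.mul_assoc]
  simp [Matrix.mul_apply, dotProduct, mulVec]

open scoped Pointwise in
lemma exists_W_unif {r n : ℕ} (X : Matrix (Fin r) (Fin n) ℂ) (T : ℝ)
    (H : ∀ (C : Matrix (Fin n) (Fin r) ℂ) (η : Fin n → ℂ), Contr C → nsq η ≤ 1 →
      ‖(X * diagonal η * C).trace‖ ≤ T) (e : ℝ) (he : 0 < e) :
    ∃ W : Matrix (Fin r) (Fin r) ℂ, W.PosDef ∧ W.trace.re ≤ T + e * r ∧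
      ∀ j, (star (fun i => X i j) ⬝ᵥ (W⁻¹ *ᵥ fun i => X i j)).re ≤ T + e := by
  let K0 : Set (Fin n → ℝ) := {u | ∃ W : Matrix (Fin r) (Fin r) ℂ, W.PosDef ∧
    W.trace.re ≤ T + e * r ∧ ∀ j z,
      2 * (star z ⬝ᵥ (fun i => X i j)).re - (star z ⬝ᵥ (W *ᵥ z)).re ≤ u j}
  have hK0 : Convex ℝ K0 := by
    rintro u ⟨W, hW, hWt, hWu⟩ v ⟨V, hV, hVt, hVv⟩ a b ha hb hab
    refine ⟨(a : ℂ) • W + (b : ℂ) • V, ?_, ?_, ?_⟩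
    · rcases ha.eq_or_lt with rfl | ha'
      · have hb1 : b = 1 := by linarith
        subst hb1
        simpa using hV
      · exact (hW.smul (Complex.zero_lt_real.2 ha')).add_posSemidef
          (hV.posSemidef.smul (Complex.zero_le_real.2 hb))
    · rw [trace_add, trace_smul, trace_smul, smul_eq_mul, smul_eq_mul, Complex.add_re,
        Complex.re_ofReal_mul, Complex.re_ofReal_mul]
      have : T + e * r = a * (T + e * r) + b * (T + e * r) := by rw [← add_mul, hab, one_mul]
      rw [this]
      gcongr
    · intro j z
      have h1 := mul_le_mul_of_nonneg_left (hWu j z) ha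
      have h2 := mul_le_mul_of_nonneg_left (hVv j z) hb
      rw [Matrix.add_mulVec, dotProduct_add, Matrix.smul_mulVec, Matrix.smul_mulVec,
        dotProduct_smul, dotProduct_smul, smul_eq_mul, smul_eq_mul, Complex.add_re,
        Complex.re_ofReal_mul, Complex.re_ofReal_mul]
      simp only [Pi.add_apply, Pi.smul_apply, smul_eq_mul]
      have hb' : b = 1 - a := by linarith
      subst hb'
      linarith
  let Q : Set (Fin n → ℝ) := Set.univ.pi fun _ => Set.Ioi 0
  have hQo : IsOpen Q := isOpen_set_pi Set.finite_univ fun _ _ => isOpen_Ioi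
  have hQc : Convex ℝ Q := convex_pi fun _ _ => convex_Ioi 0
  by_cases hmem : (fun _ => T + e) ∈ K0 + Q
  · obtain ⟨u, ⟨W, hW, hWt, hWu⟩, q, hq, huq⟩ := hmem
    refine ⟨W, hW, hWt, fun j => ?_⟩
    have h1 := hWu j (W⁻¹ *ᵥ fun i => X i j)
    have hdet : IsUnit W.det := (Matrix.isUnit_iff_isUnit_det W).1 hW.isUnit
    have hi2 : W * W⁻¹ = 1 := Matrix.mul_nonsing_inv W hdet
    have hh : (W⁻¹)ᴴ = W⁻¹ := hW.inv.isHermitian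
    rw [Matrix.mulVec_mulVec, hi2, Matrix.one_mulVec, Matrix.star_mulVec, hh,
      ← Matrix.dotProduct_mulVec] at h1
    have h2 : u j + q j = T + e := congrFun huq j
    have h3 : 0 < q j := hq j trivial
    linarith
  · exfalso
    obtain ⟨f, hf⟩ := geometric_hahn_banach_open_point (hK0.add hQc) hQo.add_left hmem
    have hfsum : ∀ u : Fin n → ℝ, f u = ∑ j, u j * f (Pi.single j 1) := by
      intro u
      conv_lhs => rw [pi_eq_sum_univ' u]
      rw [map_sum]
      refine Finset.sum_congr rfl fun j _ => ?_
      rw [map_smul, smul_eq_mul]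
    set p : Fin n → ℝ := fun j => - f (Pi.single j 1) with hp
    -- points of `K0 + Q` obtained from a positive definite `W`
    have hpt : ∀ W : Matrix (Fin r) (Fin r) ℂ, W.PosDef → W.trace.re ≤ T + e * r →
        ∀ q ∈ Q, (fun j => (star (fun i => X i j) ⬝ᵥ (W⁻¹ *ᵥ fun i => X i j)).re) + q ∈ K0 + Q :=
      fun W hW hWt q hq => Set.add_mem_add ⟨W, hW, hWt, fun j z => complete_sq hW _ z⟩ hq
    have hmain : ∀ W : Matrix (Fin r) (Fin r) ℂ, W.PosDef → W.trace.re ≤ T + e * r →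
        ∀ q ∈ Q, (∑ j, p j) * (T + e) <
          ∑ j, p j * (star (fun i => X i j) ⬝ᵥ (W⁻¹ *ᵥ fun i => X i j)).re + ∑ j, p j * q j := by
      intro W hW hWt q hq
      have h1 := hf _ (hpt W hW hWt q hq)
      rw [hfsum, hfsum] at h1
      rw [← Finset.sum_add_distrib, Finset.sum_mul]
      have h2 := neg_lt_neg h1
      rw [← Finset.sum_neg_distrib, ← Finset.sum_neg_distrib] at h2
      refine lt_of_eq_of_lt (Finset.sum_congr rfl fun j _ => ?_)
        (lt_of_lt_of_eq h2 (Finset.sum_congr rfl fun j _ => ?_))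
      · show -f (Pi.single j 1) * _ = _
        ring
      · simp only [hp, Pi.add_apply]; ring
    obtain ⟨W0, hW0, hW0t, -⟩ := exists_W X T H 0 (by simp) (by simp) e he
    have hp0 : ∀ j, 0 ≤ p j := by
      intro j
      by_contra hneg
      push Not at hneg
      set c := ∑ j, p j * (star (fun i => X i j) ⬝ᵥ (W0⁻¹ *ᵥ fun i => X i j)).re with hc
      set d := (∑ j, p j) * (T + e) with hd
      -- take a huge coordinate in direction `j`
      set s : ℝ := (|c - d + ∑ k, p k| + 1) / (-p j) with hsdef
      have hs : 0 < s := div_pos (by positivity) (by linarith)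
      have h1 := hmain W0 hW0 hW0t (fun k => 1 + if k = j then s else 0) (by
        intro k _
        show 0 < 1 + if k = j then s else 0
        split_ifs <;> linarith)
      have h2 : ∑ k, p k * (1 + if k = j then s else 0) = ∑ k, p k + p j * s := by
        simp [mul_add, Finset.sum_add_distrib]
      rw [h2] at h1
      have h3 : p j * s = -(|c - d + ∑ k, p k| + 1) := by
        rw [hsdef]; field_simp [hneg.ne]
      have := le_abs_self (c - d + ∑ k, p k)
      linarith
    have hle : ∀ W : Matrix (Fin r) (Fin r) ℂ, W.PosDef → W.trace.re ≤ T + e * r →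
        0 < ∑ j, p j ∧ (∑ j, p j) * (T + e) ≤
          ∑ j, p j * (star (fun i => X i j) ⬝ᵥ (W⁻¹ *ᵥ fun i => X i j)).re + (∑ j, p j) * (e / 2) := by
      intro W hW hWt
      have h1 := hmain W hW hWt (fun _ => e / 2) (fun _ _ => half_pos he)
      rw [← Finset.sum_mul] at h1
      refine ⟨?_, h1.le⟩
      refine lt_of_le_of_ne (Finset.sum_nonneg fun j _ => hp0 j) fun h0 => ?_
      have hz := (Finset.sum_eq_zero_iff_of_nonneg fun j _ => hp0 j).1 h0.symm
      rw [← h0, Finset.sum_eq_zero fun j hj => by rw [hz j hj, zero_mul]] at h1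
      simp at h1
    obtain ⟨hspos, -⟩ := hle W0 hW0 hW0t
    set s := ∑ j, p j with hs
    obtain ⟨W, hW, hWt, hWT⟩ := exists_W X T H (fun j => p j / s)
      (fun j => div_nonneg (hp0 j) hspos.le)
      (by rw [← Finset.sum_div, ← hs, div_self hspos.ne']) e he
    obtain ⟨-, h2⟩ := hle W hW hWt
    rw [trace_eq_sum] at hWT
    have h3 : ∑ j, p j * (star (fun i => X i j) ⬝ᵥ (W⁻¹ *ᵥ fun i => X i j)).re ≤ s * T := by
      have h4 := mul_le_mul_of_nonneg_left hWT hspos.le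
      refine le_trans (le_of_eq ?_) h4
      rw [Finset.mul_sum]
      refine Finset.sum_congr rfl fun j _ => ?_
      field_simp
    nlinarith

open scoped MatrixOrder in
lemma exists_fact {r n : ℕ} (X : Matrix (Fin r) (Fin n) ℂ) (T : ℝ)
    (H : ∀ (C : Matrix (Fin n) (Fin r) ℂ) (η : Fin n → ℂ), Contr C → nsq η ≤ 1 →
      ‖(X * diagonal η * C).trace‖ ≤ T) (e : ℝ) (he : 0 < e) :
    ∃ (A : Matrix (Fin r) (Fin r) ℂ) (R : Matrix (Fin r) (Fin n) ℂ), X = A * R ∧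
      ∑ i, ∑ k, ‖A i k‖ ^ 2 ≤ T + e * r ∧ ∀ j, ∑ k, ‖R k j‖ ^ 2 ≤ T + e := by
  obtain ⟨W, hW, hWt, hWu⟩ := exists_W_unif X T H e he
  obtain ⟨S, hS, hSS⟩ := exists_sqrt hW
  have hdet : IsUnit S.det := (Matrix.isUnit_iff_isUnit_det S).1 hS.isUnit
  have hi2 : S * S⁻¹ = 1 := Matrix.mul_nonsing_inv S hdet
  have hh : (S⁻¹)ᴴ = S⁻¹ := hS.inv.isHermitian
  have hWi : W⁻¹ = S⁻¹ * S⁻¹ := by rw [← hSS, Matrix.mul_inv_rev]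
  refine ⟨S, S⁻¹ * X, by rw [← Matrix.mul_assoc, hi2, Matrix.one_mul], ?_, ?_⟩
  · refine le_trans (le_of_eq ?_) hWt
    have hSh : Sᴴ = S := hS.isHermitian
    have h1 : W = S * Sᴴ := by rw [hSh, hSS]
    rw [h1]
    simp only [Matrix.trace, diag_apply, Matrix.mul_apply, conjTranspose_apply, Complex.re_sum]
    refine Finset.sum_congr rfl fun i _ => Finset.sum_congr rfl fun k _ => ?_
    rw [Complex.star_def, Complex.mul_conj', ← Complex.ofReal_pow, Complex.ofReal_re]
  · intro j
    refine le_trans (le_of_eq ?_) (hWu j)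
    have h1 := nsq_mulVec S⁻¹ (fun i => X i j)
    rw [hh, ← hWi] at h1
    rw [← h1, Complex.ofReal_re]
    rfl

lemma exists_fact_lim {r n : ℕ} (X : Matrix (Fin r) (Fin n) ℂ) (T : ℝ)
    (H : ∀ (C : Matrix (Fin n) (Fin r) ℂ) (η : Fin n → ℂ), Contr C → nsq η ≤ 1 →
      ‖(X * diagonal η * C).trace‖ ≤ T) :
    ∃ (A : Matrix (Fin r) (Fin r) ℂ) (R : Matrix (Fin r) (Fin n) ℂ), X = A * R ∧
      ∑ i, ∑ k, ‖A i k‖ ^ 2 ≤ T ∧ ∀ j, ∑ k, ‖R k j‖ ^ 2 ≤ T := by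
  have hT : 0 ≤ T := (norm_nonneg _).trans (H 0 0 (fun v => by simpa [nsq] using nsq_nonneg v)
    (by simp [nsq]))
  let e : ℕ → ℝ := fun k => 1 / ((k : ℝ) + 1)
  have he : ∀ k, 0 < e k := fun k => Nat.one_div_pos_of_nat
  have he0 : Filter.Tendsto e Filter.atTop (nhds 0) := tendsto_one_div_add_atTop_nhds_zero_nat
  have he1 : ∀ k, e k ≤ 1 := fun k => by
    show 1 / ((k : ℝ) + 1) ≤ 1
    rw [div_le_one (by positivity)]
    linarith [(Nat.cast_nonneg k : (0 : ℝ) ≤ k)]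
  choose A R hX hA hR using fun k => exists_fact X T H (e k) (he k)
  let c : ℝ := T + r + 1
  have hc : 0 ≤ c := by positivity
  let u : ℕ → (Fin r → Fin r → ℂ) × (Fin r → Fin n → ℂ) := fun k => (A k, R k)
  have hbound : ∀ (z : ℂ) , ‖z‖ ^ 2 ≤ c → ‖z‖ ≤ c + 1 := fun z hz => by
    nlinarith [norm_nonneg z, sq_nonneg (‖z‖ - 1)]
  have hu : ∀ k, u k ∈ Metric.closedBall
      (0 : (Fin r → Fin r → ℂ) × (Fin r → Fin n → ℂ)) (c + 1) := by
    intro k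
    rw [mem_closedBall_zero_iff, Prod.norm_def]
    refine max_le ?_ ?_
    · refine (pi_norm_le_iff_of_nonneg (by linarith)).2 fun i =>
        (pi_norm_le_iff_of_nonneg (by linarith)).2 fun j => hbound _ ?_
      have h1 : ‖A k i j‖ ^ 2 ≤ ∑ l, ‖A k i l‖ ^ 2 :=
        Finset.single_le_sum (f := fun l => ‖A k i l‖ ^ 2) (fun _ _ => by positivity)
          (Finset.mem_univ j)
      have h2 : ∑ l, ‖A k i l‖ ^ 2 ≤ ∑ i, ∑ l, ‖A k i l‖ ^ 2 :=
        Finset.single_le_sum (f := fun i => ∑ l, ‖A k i l‖ ^ 2)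
          (fun _ _ => Finset.sum_nonneg fun _ _ => by positivity) (Finset.mem_univ i)
      have h3 : e k * r ≤ r := mul_le_of_le_one_left (Nat.cast_nonneg r) (he1 k)
      have h4 := hA k
      show ‖A k i j‖ ^ 2 ≤ T + r + 1
      linarith
    · refine (pi_norm_le_iff_of_nonneg (by linarith)).2 fun i =>
        (pi_norm_le_iff_of_nonneg (by linarith)).2 fun j => hbound _ ?_
      have h1 : ‖R k i j‖ ^ 2 ≤ ∑ l, ‖R k l j‖ ^ 2 :=
        Finset.single_le_sum (f := fun l => ‖R k l j‖ ^ 2) (fun _ _ => by positivity)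
          (Finset.mem_univ i)
      have h4 := hR k j
      have h5 := he1 k
      have h6 : (0 : ℝ) ≤ r := Nat.cast_nonneg r
      show ‖R k i j‖ ^ 2 ≤ T + r + 1
      linarith
  obtain ⟨⟨A', R'⟩, -, φ, hφ, hlim⟩ := (isCompact_closedBall _ _).tendsto_subseq hu
  have hlA : ∀ i k, Filter.Tendsto (fun t => A (φ t) i k) Filter.atTop (nhds (A' i k)) := by
    intro i k
    have h1 := hlim.fst_nhds
    exact (tendsto_pi_nhds.1 (tendsto_pi_nhds.1 h1 i) k)
  have hlR : ∀ i k, Filter.Tendsto (fun t => R (φ t) i k) Filter.atTop (nhds (R' i k)) := by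
    intro i k
    have h1 := hlim.snd_nhds
    exact (tendsto_pi_nhds.1 (tendsto_pi_nhds.1 h1 i) k)
  have heφ := he0.comp hφ.tendsto_atTop
  refine ⟨A', R', ?_, ?_, ?_⟩
  · ext i j
    have h1 : Filter.Tendsto (fun t => ∑ k, A (φ t) i k * R (φ t) k j) Filter.atTop
        (nhds (∑ k, A' i k * R' k j)) :=
      tendsto_finsetSum _ fun k _ => (hlA i k).mul (hlR k j)
    have h2 : (fun t => ∑ k, A (φ t) i k * R (φ t) k j) = fun _ => X i j := by
      funext t
      conv_rhs => rw [hX (φ t)]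
      rfl
    rw [h2] at h1
    exact tendsto_nhds_unique tendsto_const_nhds h1
  · have h1 : Filter.Tendsto (fun t => ∑ i, ∑ k, ‖A (φ t) i k‖ ^ 2) Filter.atTop
        (nhds (∑ i, ∑ k, ‖A' i k‖ ^ 2)) :=
      tendsto_finsetSum _ fun i _ => tendsto_finsetSum _ fun k _ => (hlA i k).norm.pow 2
    have h2 : Filter.Tendsto (fun t => T + e (φ t) * r) Filter.atTop (nhds (T + 0 * r)) :=
      (heφ.mul_const _).const_add T
    have h3 := le_of_tendsto_of_tendsto' h1 h2 fun t => hA (φ t)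
    simpa using h3
  · intro j
    have h1 : Filter.Tendsto (fun t => ∑ k, ‖R (φ t) k j‖ ^ 2) Filter.atTop
        (nhds (∑ k, ‖R' k j‖ ^ 2)) :=
      tendsto_finsetSum _ fun k _ => (hlR k j).norm.pow 2
    have h2 : Filter.Tendsto (fun t => T + e (φ t)) Filter.atTop (nhds (T + 0)) :=
      heφ.const_add T
    have h3 := le_of_tendsto_of_tendsto' h1 h2 fun t => hR (φ t) j
    simpa using h3

/-- orthonormal basis of the range of `X` -/
lemma exists_isometry {m n : ℕ} (X : Matrix (Fin m) (Fin n) ℂ) :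
    ∃ U : Matrix (Fin m) (Fin X.rank) ℂ, Uᴴ * U = 1 ∧ U * (Uᴴ * X) = X := by
  let V : Submodule ℂ (EuclideanSpace ℂ (Fin m)) := LinearMap.range (Matrix.toEuclideanLin X)
  have hV : Module.finrank ℂ V = X.rank :=
    (Matrix.rank_eq_finrank_range_toLin X (EuclideanSpace.basisFun (Fin m) ℂ).toBasis
      (EuclideanSpace.basisFun (Fin n) ℂ).toBasis).symm
  let b : OrthonormalBasis (Fin X.rank) ℂ V := (stdOrthonormalBasis ℂ V).reindex (finCongr hV)
  let U : Matrix (Fin m) (Fin X.rank) ℂ := Matrix.of fun i k => (b k : EuclideanSpace ℂ (Fin m)) i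
  refine ⟨U, ?_, ?_⟩
  · ext k l
    have h := orthonormal_iff_ite.1 b.orthonormal k l
    rw [Matrix.one_apply, ← h]
    simp [Matrix.mul_apply, U, PiLp.inner_apply, mul_comm]
  · ext i j
    let x : EuclideanSpace ℂ (Fin m) := Matrix.toEuclideanLin X (EuclideanSpace.single j 1)
    have hx : ∀ i, x i = X i j := by
      intro i
      simp [x, Matrix.toLpLin_apply]
    have h := congrArg (fun v : V => (v : EuclideanSpace ℂ (Fin m)) i)
      (b.sum_repr' ⟨x, LinearMap.mem_range_self _ _⟩)
    simp only [hx] at h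
    rw [← h]
    simp [Matrix.mul_apply, U, PiLp.inner_apply, hx, mul_comm]

lemma rank_ct {k l : ℕ} (L : Matrix (Fin k) (Fin l) ℂ) : Lᴴ.rank = L.rank :=
  Matrix.rank_conjTranspose L

end TxAux

/-- Norm optimal factorization for `T_X`: `X = Δ_m(γ) Lᴴ R` with `L`, `R` of the same
rank as `X` and `‖γ‖₂ ‖L‖_c ‖R‖_c = ‖T_X‖`. -/
theorem exists_Tx_optimal_factorization
    (m n : ℕ) (X : Matrix (Fin m) (Fin n) ℂ) :
    ∃ (γ : Fin m → ℂ) (L : Matrix (Fin X.rank) (Fin m) ℂ) (R : Matrix (Fin X.rank) (Fin n) ℂ),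
      L.rank = X.rank ∧ R.rank = X.rank ∧
      X = Matrix.diagonal γ * (Lᴴ * R) ∧
      eNorm γ * colNorm L * colNorm R = TxNorm X := by
  obtain ⟨U, hU, hUX⟩ := TxAux.exists_isometry X
  have hUc : TxAux.Contr U := fun v => by
    have h := TxAux.nsq_mulVec U v
    rw [hU, Matrix.one_mulVec, TxAux.dot_self] at h
    exact (Complex.ofReal_injective h).le
  have hUhc := TxAux.contr_conjTranspose hUc
  have H : ∀ (C : Matrix (Fin n) (Fin X.rank) ℂ) (η : Fin n → ℂ), TxAux.Contr C →
      TxAux.nsq η ≤ 1 → ‖((Uᴴ * X) * diagonal η * C).trace‖ ≤ TxNorm X := by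
    intro C η hC hη
    have h1 : TxAux.Contr (C * Uᴴ) := fun v => by
      rw [← Matrix.mulVec_mulVec]
      exact (hC _).trans (hUhc v)
    have h2 := TxAux.le_Tx X (C * Uᴴ) h1 η hη
    rwa [← Matrix.mul_assoc, Matrix.trace_mul_comm, ← Matrix.mul_assoc, ← Matrix.mul_assoc] at h2
  obtain ⟨A, R, hAR, hA, hR⟩ := TxAux.exists_fact_lim (Uᴴ * X) (TxNorm X) H
  have hT := TxAux.Tx_nonneg X
  set D := U * A with hD
  have hXD : X = D * R := by rw [hD, Matrix.mul_assoc, ← hAR, hUX]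
  have hDn : ∑ i, ∑ k, ‖D i k‖ ^ 2 ≤ TxNorm X := by
    rw [Finset.sum_comm]
    rw [Finset.sum_comm] at hA
    exact le_trans (Finset.sum_le_sum fun k _ => hUc (fun i => A i k)) hA
  let g : Fin m → ℝ := fun i => Real.sqrt (∑ k, ‖D i k‖ ^ 2)
  have hg2 : ∀ i, g i ^ 2 = ∑ k, ‖D i k‖ ^ 2 :=
    fun i => Real.sq_sqrt (Finset.sum_nonneg fun _ _ => by positivity)
  let γ : Fin m → ℂ := fun i => (g i : ℂ)
  let L : Matrix (Fin X.rank) (Fin m) ℂ := Matrix.of fun k i => star (D i k) / (g i : ℂ)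
  have hDL : D = diagonal γ * Lᴴ := by
    ext i k
    rw [diagonal_mul, conjTranspose_apply]
    simp only [L, γ, Matrix.of_apply, star_div₀, Complex.star_def, Complex.conj_ofReal]
    by_cases h0 : g i = 0
    · have h1 := hg2 i
      rw [h0, zero_pow two_ne_zero, eq_comm,
        Finset.sum_eq_zero_iff_of_nonneg fun _ _ => by positivity] at h1
      have h2 := h1 k (Finset.mem_univ _)
      have h3 : D i k = 0 := by simpa using h2
      rw [h0, h3]; simp
    · have : (g i : ℂ) ≠ 0 := Complex.ofReal_ne_zero.2 h0
      simp [mul_div_cancel₀, this]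
  have hX : X = diagonal γ * (Lᴴ * R) := by rw [← Matrix.mul_assoc, ← hDL, ← hXD]
  refine ⟨γ, L, R, ?_, ?_, hX, ?_⟩
  · refine le_antisymm ((Matrix.rank_le_height L)) ?_
    rw [← TxAux.rank_ct L]
    conv_lhs => rw [hX]
    exact (Matrix.rank_mul_le_right _ _).trans (Matrix.rank_mul_le_left _ _)
  · refine le_antisymm ((Matrix.rank_le_height R)) ?_
    conv_lhs => rw [hXD]
    exact Matrix.rank_mul_le_right _ _
  · refine le_antisymm ?_ (TxAux.Tx_le γ L R X hX)
    have h1 : eNorm γ ≤ Real.sqrt (TxNorm X) := by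
      refine Real.sqrt_le_sqrt (le_trans (le_of_eq ?_) hDn)
      refine Finset.sum_congr rfl fun i _ => ?_
      rw [← hg2 i]
      simp [γ]
    have h2 : colNorm L ≤ 1 := by
      rw [← Real.sqrt_one]
      refine TxAux.colNorm_le L fun i => ?_
      have : ∀ k, ‖L k i‖ ^ 2 = ‖D i k‖ ^ 2 / g i ^ 2 := fun k => by
        simp [L, div_pow]
      simp only [this]
      rw [← Finset.sum_div, ← hg2 i]
      exact div_self_le_one _
    have h3 : colNorm R ≤ Real.sqrt (TxNorm X) := TxAux.colNorm_le R hR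
    have h4 : eNorm γ * colNorm L ≤ Real.sqrt (TxNorm X) := by
      have := mul_le_mul h1 h2 (TxAux.colNorm_nonneg L) (Real.sqrt_nonneg _)
      rwa [mul_one] at this
    calc _ ≤ Real.sqrt (TxNorm X) * Real.sqrt (TxNorm X) :=
          mul_le_mul h4 h3 (TxAux.colNorm_nonneg R) (Real.sqrt_nonneg _)
      _ = _ := Real.mul_self_sqrt hT
end

section
/- Let X be an m×n complex matrix and let l = min(m, n). Then ‖T_X‖ ≤ 1 if and only if there exist γ ∈ ℂᵐ with ‖γ‖₂ ≤ 1, an l×m complex matrix L with ‖L‖_c ≤ 1, and an l×n complex matrix R with ‖R‖_c ≤ 1, such that X = Δ_m(γ) Lᴴ R. -/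
open Matrix BigOperators

lemma opNorm_le_one_iff {m n : ℕ} (B : Matrix (Fin m) (Fin n) ℂ) :
    opNorm B ≤ 1 ↔ ∀ w : Fin n → ℂ, ∑ i, ‖(B *ᵥ w) i‖ ^ 2 ≤ ∑ j, ‖w j‖ ^ 2 := by
  unfold opNorm
  rw [ContinuousLinearMap.opNorm_le_iff zero_le_one]
  constructor
  · intro h w
    have h1 := h (WithLp.toLp 2 w)
    rw [one_mul] at h1
    have h2 := pow_le_pow_left₀ (norm_nonneg _) h1 2
    rw [EuclideanSpace.norm_sq_eq, EuclideanSpace.norm_sq_eq] at h2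
    exact h2
  · intro h x
    rw [one_mul]
    refine le_of_sq_le_sq ?_ (norm_nonneg _)
    rw [EuclideanSpace.norm_sq_eq, EuclideanSpace.norm_sq_eq]
    exact h (WithLp.ofLp x)

lemma entry_le_one {m n : ℕ} {B : Matrix (Fin m) (Fin n) ℂ} (hB : opNorm B ≤ 1)
    (i : Fin m) (j : Fin n) : ‖B i j‖ ≤ 1 := by
  have h := (opNorm_le_one_iff B).1 hB (Pi.single j 1)
  have h2 : ∑ k, ‖(Pi.single j (1 : ℂ) : Fin n → ℂ) k‖ ^ 2 = 1 := by
    rw [Finset.sum_eq_single j]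
    · simp
    · intro b _ hb; simp [hb]
    · simp
  rw [h2] at h
  have h3 : ‖B i j‖ ^ 2 ≤ ∑ i, ‖(B *ᵥ Pi.single j 1) i‖ ^ 2 := by
    have := Finset.single_le_sum (f := fun i => ‖(B *ᵥ Pi.single j 1) i‖ ^ 2)
      (fun _ _ => sq_nonneg _) (Finset.mem_univ i)
    simpa using this
  have h4 := h3.trans h
  nlinarith [norm_nonneg (B i j)]

lemma eNorm_le_one_iff {n : ℕ} (v : Fin n → ℂ) : eNorm v ≤ 1 ↔ ∑ j, ‖v j‖ ^ 2 ≤ 1 := by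
  unfold eNorm
  rw [Real.sqrt_le_one]

lemma colNorm_le_one_iff {l m : ℕ} (L : Matrix (Fin l) (Fin m) ℂ) :
    colNorm L ≤ 1 ↔ ∀ j, ∑ i, ‖L i j‖ ^ 2 ≤ 1 := by
  unfold colNorm
  constructor
  · intro h j
    have := (le_ciSup (f := fun j : Fin m => Real.sqrt (∑ i, ‖L i j‖ ^ 2))
      (Set.finite_range _).bddAbove j).trans h
    exact Real.sqrt_le_one.1 this
  · intro h
    exact Real.iSup_le (fun j => Real.sqrt_le_one.2 (h j)) zero_le_one

lemma TxNorm_le_one_iff {m n : ℕ} (X : Matrix (Fin m) (Fin n) ℂ) :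
    TxNorm X ≤ 1 ↔ ∀ (a : Fin m → ℂ) (B : Matrix (Fin m) (Fin n) ℂ), (∀ i, ‖a i‖ ≤ 1) →
      opNorm B ≤ 1 → ∑ j, ‖∑ i, a i * X i j * B i j‖ ^ 2 ≤ 1 := by
  unfold TxNorm
  constructor
  · intro h a B ha hB
    rw [← eNorm_le_one_iff]
    refine le_trans (le_ciSup (f := fun p : {p : (Fin m → ℂ) × Matrix (Fin m) (Fin n) ℂ //
      (∀ i, ‖p.1 i‖ ≤ 1) ∧ opNorm p.2 ≤ 1} =>
      eNorm (fun j => ∑ i, p.1.1 i * X i j * p.1.2 i j)) ?_ ⟨(a, B), ha, hB⟩) h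
    refine ⟨Real.sqrt (∑ j, (∑ i, ‖X i j‖) ^ 2), ?_⟩
    rintro _ ⟨⟨⟨a, B⟩, ha, hB⟩, rfl⟩
    refine Real.sqrt_le_sqrt ?_
    refine Finset.sum_le_sum fun j _ => ?_
    refine pow_le_pow_left₀ (norm_nonneg _) ?_ 2
    refine (norm_sum_le _ _).trans (Finset.sum_le_sum fun i _ => ?_)
    rw [norm_mul, norm_mul]
    have h1 := ha i
    have h2 := entry_le_one hB i j
    dsimp only at h1 h2 ⊢
    calc ‖a i‖ * ‖X i j‖ * ‖B i j‖ ≤ 1 * ‖X i j‖ * 1 := by gcongr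
      _ = _ := by ring
  · intro h
    refine Real.iSup_le ?_ zero_le_one
    rintro ⟨⟨a, B⟩, ha, hB⟩
    exact (eNorm_le_one_iff _).2 (h a B ha hB)

lemma transpose_contr {m n : ℕ} {B : Matrix (Fin m) (Fin n) ℂ} (hB : opNorm B ≤ 1)
    (u : Fin m → ℂ) : ∑ j, ‖∑ i, u i * B i j‖ ^ 2 ≤ ∑ i, ‖u i‖ ^ 2 := by
  set z : Fin n → ℂ := fun j => ∑ i, u i * B i j with hz
  have h := (opNorm_le_one_iff B).1 hB (fun j => star (z j))
  simp only [norm_star] at h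
  have h1 : ((∑ j, ‖z j‖ ^ 2 : ℝ) : ℂ) = ∑ i, u i * (B *ᵥ fun j => star (z j)) i := by
    push_cast
    have : ∀ j, ((‖z j‖ : ℂ)) ^ 2 = ∑ i, u i * B i j * star (z j) := by
      intro j
      rw [← Finset.sum_mul]
      exact (Complex.mul_conj' (z j)).symm
    simp only [this]
    rw [Finset.sum_comm]
    simp only [mulVec, dotProduct, Finset.mul_sum, mul_assoc]
  have h2 : ∑ j, ‖z j‖ ^ 2 ≤ ∑ i, ‖u i‖ * ‖(B *ᵥ fun j => star (z j)) i‖ := by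
    have h3 := congrArg norm h1
    rw [Complex.norm_real, Real.norm_of_nonneg (by positivity)] at h3
    rw [h3]
    refine (norm_sum_le _ _).trans (le_of_eq ?_)
    simp
  have h4 : ∑ i, ‖u i‖ * ‖(B *ᵥ fun j => star (z j)) i‖ ≤
      ∑ i, (‖u i‖ ^ 2 + ‖(B *ᵥ fun j => star (z j)) i‖ ^ 2) / 2 := by
    refine Finset.sum_le_sum fun i _ => ?_
    nlinarith [sq_nonneg (‖u i‖ - ‖(B *ᵥ fun j => star (z j)) i‖)]
  rw [← Finset.sum_div, Finset.sum_add_distrib] at h4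
  change ∑ j, ‖z j‖ ^ 2 ≤ _
  linarith

lemma backward {m n l : ℕ} (γ : Fin m → ℂ) (L : Matrix (Fin l) (Fin m) ℂ)
    (R : Matrix (Fin l) (Fin n) ℂ) (hγ : ∑ i, ‖γ i‖ ^ 2 ≤ 1)
    (hL : ∀ i, ∑ k, ‖L k i‖ ^ 2 ≤ 1) (hR : ∀ j, ∑ k, ‖R k j‖ ^ 2 ≤ 1)
    (a : Fin m → ℂ) (B : Matrix (Fin m) (Fin n) ℂ) (ha : ∀ i, ‖a i‖ ≤ 1) (hB : opNorm B ≤ 1) :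
    ∑ j, ‖∑ i, a i * (Matrix.diagonal γ * (Lᴴ * R)) i j * B i j‖ ^ 2 ≤ 1 := by
  set c : Fin l → Fin n → ℂ := fun k j => ∑ i, (a i * γ i * star (L k i)) * B i j with hc
  have e : ∀ j, ∑ i, a i * (Matrix.diagonal γ * (Lᴴ * R)) i j * B i j = ∑ k, R k j * c k j := by
    intro j
    simp only [Matrix.diagonal_mul]
    simp only [hc, Matrix.mul_apply, Matrix.conjTranspose_apply,
      Finset.mul_sum, Finset.sum_mul]
    rw [Finset.sum_comm]
    refine Finset.sum_congr rfl fun k _ => Finset.sum_congr rfl fun i _ => ?_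
    ring
  have h1 : ∀ j, ‖∑ k, R k j * c k j‖ ^ 2 ≤ ∑ k, ‖c k j‖ ^ 2 := by
    intro j
    calc ‖∑ k, R k j * c k j‖ ^ 2 ≤ (∑ k, ‖R k j‖ * ‖c k j‖) ^ 2 := by
          refine pow_le_pow_left₀ (norm_nonneg _) ((norm_sum_le _ _).trans (le_of_eq ?_)) 2
          simp
      _ ≤ (∑ k, ‖R k j‖ ^ 2) * ∑ k, ‖c k j‖ ^ 2 := Finset.sum_mul_sq_le_sq_mul_sq _ _ _
      _ ≤ 1 * ∑ k, ‖c k j‖ ^ 2 := by gcongr; exact hR j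
      _ = _ := one_mul _
  simp only [e]
  calc ∑ j, ‖∑ k, R k j * c k j‖ ^ 2 ≤ ∑ j, ∑ k, ‖c k j‖ ^ 2 := Finset.sum_le_sum fun j _ => h1 j
    _ = ∑ k, ∑ j, ‖c k j‖ ^ 2 := Finset.sum_comm
    _ ≤ ∑ k, ∑ i, ‖a i * γ i * star (L k i)‖ ^ 2 :=
        Finset.sum_le_sum fun k _ => transpose_contr hB _
    _ = ∑ i, ∑ k, ‖a i * γ i * star (L k i)‖ ^ 2 := Finset.sum_comm
    _ ≤ ∑ i, ‖γ i‖ ^ 2 := by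
        refine Finset.sum_le_sum fun i _ => ?_
        simp only [norm_mul, norm_star, mul_pow]
        rw [← Finset.mul_sum]
        have h2 := hL i
        have h3 : ‖a i‖ ^ 2 ≤ 1 := pow_le_one₀ (norm_nonneg _) (ha i)
        calc ‖a i‖ ^ 2 * ‖γ i‖ ^ 2 * ∑ k, ‖L k i‖ ^ 2 ≤ 1 * ‖γ i‖ ^ 2 * 1 := by gcongr
          _ = _ := by ring
    _ ≤ 1 := hγ

/-- Dimension reduction. -/
lemma dim_red {m n : ℕ} {E : Type*} [NormedAddCommGroup E] [InnerProductSpace ℂ E]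
    [FiniteDimensional ℂ E] (x : Fin m → E) (y : Fin n → E) :
    ∃ (x' : Fin m → EuclideanSpace ℂ (Fin (min m n))) (y' : Fin n → EuclideanSpace ℂ (Fin (min m n))),
      (∀ i, ‖x' i‖ ≤ ‖x i‖) ∧ (∀ j, ‖y' j‖ ≤ ‖y j‖) ∧
      ∀ i j, inner ℂ (x' i) (y' j) = inner ℂ (x i) (y j) := by
  have key : ∃ S : Submodule ℂ E, Module.finrank ℂ S ≤ min m n ∧
      ((∀ i, x i ∈ S) ∨ (∀ j, y j ∈ S)) := by
    rcases le_total m n with h | h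
    · refine ⟨Submodule.span ℂ (Set.range x), ?_, Or.inl fun i => Submodule.subset_span ⟨i, rfl⟩⟩
      rw [min_eq_left h]
      simpa [Set.finrank] using finrank_range_le_card (R := ℂ) x
    · refine ⟨Submodule.span ℂ (Set.range y), ?_, Or.inr fun i => Submodule.subset_span ⟨i, rfl⟩⟩
      rw [min_eq_right h]
      simpa [Set.finrank] using finrank_range_le_card (R := ℂ) y
  obtain ⟨S, hS, hxy⟩ := key
  let b := stdOrthonormalBasis ℂ S
  let f : S →ₗ[ℂ] EuclideanSpace ℂ (Fin (min m n)) := b.toBasis.constr ℂ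
    (fun k => EuclideanSpace.basisFun (Fin (min m n)) ℂ (Fin.castLE hS k))
  have hb : Orthonormal ℂ b.toBasis := by simpa using b.orthonormal
  have hf : Orthonormal ℂ (f ∘ b.toBasis) := by
    have : f ∘ b.toBasis =
        fun k => EuclideanSpace.basisFun (Fin (min m n)) ℂ (Fin.castLE hS k) := by
      funext k
      simp only [f, Function.comp, Module.Basis.constr_basis]
    rw [this]
    exact (EuclideanSpace.basisFun (Fin (min m n)) ℂ).orthonormal.comp _
      (Fin.castLE_injective hS)
  let φ := f.isometryOfOrthonormal hb hf
  refine ⟨fun i => φ (S.orthogonalProjectionOnto (x i)),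
    fun j => φ (S.orthogonalProjectionOnto (y j)), ?_, ?_, ?_⟩
  · intro i
    rw [φ.norm_map]
    exact S.norm_orthogonalProjectionOnto_apply_le _
  · intro i
    rw [φ.norm_map]
    exact S.norm_orthogonalProjectionOnto_apply_le _
  · intro i j
    rw [φ.inner_map_map]
    rcases hxy with h | h
    · have := S.inner_orthogonalProjectionOnto_eq_of_mem_left ⟨x i, h i⟩ (y j)
      rw [← this]
      congr 1
      exact S.orthogonalProjectionOnto_mem_subspace_eq_self ⟨x i, h i⟩
    · have := S.inner_orthogonalProjectionOnto_eq_of_mem_right ⟨y j, h j⟩ (x i)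
      rw [← this]
      congr 1
      exact S.orthogonalProjectionOnto_mem_subspace_eq_self ⟨y j, h j⟩

lemma factor_of_vectors {m n : ℕ} {E : Type*} [NormedAddCommGroup E] [InnerProductSpace ℂ E]
    [FiniteDimensional ℂ E] (X : Matrix (Fin m) (Fin n) ℂ) (x : Fin m → E) (y : Fin n → E)
    (hx : ∑ i, ‖x i‖ ^ 2 ≤ 1) (hy : ∀ j, ‖y j‖ ^ 2 ≤ 1) (hX : ∀ i j, X i j = inner ℂ (x i) (y j)) :
    ∃ (γ : Fin m → ℂ) (L : Matrix (Fin (min m n)) (Fin m) ℂ)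
        (R : Matrix (Fin (min m n)) (Fin n) ℂ),
        eNorm γ ≤ 1 ∧ colNorm L ≤ 1 ∧ colNorm R ≤ 1 ∧
        X = Matrix.diagonal γ * (Lᴴ * R) := by
  obtain ⟨x', y', h1, h2, h3⟩ := dim_red x y
  refine ⟨fun i => (‖x' i‖ : ℂ), Matrix.of fun k i => (x' i k / (‖x' i‖ : ℂ) : ℂ),
    Matrix.of fun k j => (y' j k : ℂ), ?_, ?_, ?_, ?_⟩
  · rw [eNorm_le_one_iff]
    refine le_trans (Finset.sum_le_sum fun i _ => ?_) hx
    simp only [Complex.norm_real, norm_norm]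
    exact pow_le_pow_left₀ (norm_nonneg _) (h1 i) 2
  · rw [colNorm_le_one_iff]
    intro i
    simp only [Matrix.of_apply, norm_div, Complex.norm_real, norm_norm, div_pow]
    rw [← Finset.sum_div, ← EuclideanSpace.norm_sq_eq]
    exact div_self_le_one _
  · rw [colNorm_le_one_iff]
    intro j
    simp only [Matrix.of_apply]
    rw [← EuclideanSpace.norm_sq_eq]
    exact (pow_le_pow_left₀ (norm_nonneg _) (h2 j) 2).trans (hy j)
  · ext i j
    rw [hX, ← h3, Matrix.diagonal_mul, Matrix.mul_apply, PiLp.inner_apply, Finset.mul_sum]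
    refine Finset.sum_congr rfl fun k _ => ?_
    rw [Matrix.conjTranspose_apply, Matrix.of_apply, Matrix.of_apply]
    by_cases h0 : x' i = 0
    · simp [h0]
    · have : (‖x' i‖ : ℂ) ≠ 0 := by simpa using h0
      simp only [RCLike.inner_apply, star_div₀, RCLike.star_def, Complex.conj_ofReal]
      field_simp

lemma core_pos {m n : ℕ} (X Y : Matrix (Fin m) (Fin n) ℂ) (s : ℝ) (β : Fin n → ℝ)
    (hs : 0 < s) (hβ : ∀ j, 0 < β j)
    (hX : ∀ B : Matrix (Fin m) (Fin n) ℂ, opNorm B ≤ 1 → ∑ j, ‖∑ i, X i j * B i j‖ ^ 2 ≤ 1)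
    (h : ∀ (x : Fin m → ℂ) (y : Fin n → ℂ), 0 ≤ s * ∑ i, ‖x i‖ ^ 2 + ∑ j, β j * ‖y j‖ ^ 2 +
      2 * (∑ i, star (x i) * (Y *ᵥ y) i).re) :
    0 ≤ s + ∑ j, β j + 2 * (∑ i, ∑ j, X i j * Y i j).re := by
  set q := Real.sqrt s with hq
  have hq2 : q ^ 2 = s := Real.sq_sqrt hs.le
  have hq0 : 0 < q := Real.sqrt_pos.2 hs
  set b : Fin n → ℝ := fun j => Real.sqrt (β j) with hb
  have hb2 : ∀ j, b j ^ 2 = β j := fun j => Real.sq_sqrt (hβ j).le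
  have hb0 : ∀ j, 0 < b j := fun j => Real.sqrt_pos.2 (hβ j)
  have hqc : (q : ℂ) ≠ 0 := by exact_mod_cast hq0.ne'
  have hbc : ∀ j, (b j : ℂ) ≠ 0 := fun j => by exact_mod_cast (hb0 j).ne'
  let B : Matrix (Fin m) (Fin n) ℂ := Matrix.of fun i j => Y i j / (q * b j)
  have hYB : ∀ i j, Y i j = q * b j * B i j := by
    intro i j
    have := hbc j
    simp only [B, Matrix.of_apply]
    field_simp
  have hB : opNorm B ≤ 1 := by
    rw [opNorm_le_one_iff]
    intro w
    have h1 := h (fun i => -(B *ᵥ w) i / q) (fun j => w j / b j)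
    have e1 : ∀ i, (Y *ᵥ fun j => w j / b j) i = q * (B *ᵥ w) i := by
      intro i
      simp only [mulVec, dotProduct, Finset.mul_sum]
      refine Finset.sum_congr rfl fun j _ => ?_
      rw [hYB]
      have := hbc j
      field_simp
    have e2 : ∀ i, (star (-(B *ᵥ w) i / (q : ℂ)) * (q * (B *ᵥ w) i)) =
        ((-(‖(B *ᵥ w) i‖ ^ 2) : ℝ) : ℂ) := by
      intro i
      rw [star_div₀, star_neg]
      simp only [RCLike.star_def, Complex.conj_ofReal]
      have := Complex.conj_mul' ((B *ᵥ w) i)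
      push_cast
      rw [← this]
      field_simp
    simp only [e1, e2] at h1
    rw [← Complex.ofReal_sum, Complex.ofReal_re] at h1
    have e3 : s * ∑ i, ‖-(B *ᵥ w) i / (q : ℂ)‖ ^ 2 = ∑ i, ‖(B *ᵥ w) i‖ ^ 2 := by
      rw [Finset.mul_sum]
      refine Finset.sum_congr rfl fun i _ => ?_
      rw [norm_div, norm_neg, Complex.norm_real, div_pow, Real.norm_of_nonneg hq0.le, hq2]
      field_simp
    have e4 : ∑ j, β j * ‖w j / (b j : ℂ)‖ ^ 2 = ∑ j, ‖w j‖ ^ 2 := by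
      refine Finset.sum_congr rfl fun j _ => ?_
      have := hβ j
      rw [norm_div, Complex.norm_real, div_pow, Real.norm_of_nonneg (hb0 j).le, hb2]
      field_simp
    rw [e3, e4, Finset.sum_neg_distrib] at h1
    linarith
  have h2 := hX B hB
  set t : Fin n → ℂ := fun j => ∑ i, X i j * B i j with ht
  have e5 : ∑ i, ∑ j, X i j * Y i j = ∑ j, (q * b j : ℂ) * t j := by
    rw [Finset.sum_comm]
    refine Finset.sum_congr rfl fun j _ => ?_
    rw [ht, Finset.mul_sum]
    refine Finset.sum_congr rfl fun i _ => ?_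
    rw [hYB]; ring
  have h3 : ‖∑ i, ∑ j, X i j * Y i j‖ ≤ ∑ j, (β j + s * ‖t j‖ ^ 2) / 2 := by
    rw [e5]
    refine (norm_sum_le _ _).trans (Finset.sum_le_sum fun j _ => ?_)
    rw [norm_mul, norm_mul, Complex.norm_real, Complex.norm_real, Real.norm_of_nonneg hq0.le,
      Real.norm_of_nonneg (hb0 j).le, ← hb2, ← hq2]
    nlinarith [sq_nonneg (b j - q * ‖t j‖)]
  rw [← Finset.sum_div, Finset.sum_add_distrib, ← Finset.mul_sum] at h3
  have h4 := (abs_le.1 (Complex.abs_re_le_norm (∑ i, ∑ j, X i j * Y i j))).1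
  have h5 : s * ∑ j, ‖t j‖ ^ 2 ≤ s * 1 := by gcongr
  linarith

lemma core_nonneg {m n : ℕ} (X Y : Matrix (Fin m) (Fin n) ℂ) (s : ℝ) (β : Fin n → ℝ)
    (hs : 0 ≤ s) (hβ : ∀ j, 0 ≤ β j)
    (hX : ∀ B : Matrix (Fin m) (Fin n) ℂ, opNorm B ≤ 1 → ∑ j, ‖∑ i, X i j * B i j‖ ^ 2 ≤ 1)
    (h : ∀ (x : Fin m → ℂ) (y : Fin n → ℂ), 0 ≤ s * ∑ i, ‖x i‖ ^ 2 + ∑ j, β j * ‖y j‖ ^ 2 +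
      2 * (∑ i, star (x i) * (Y *ᵥ y) i).re) :
    0 ≤ s + ∑ j, β j + 2 * (∑ i, ∑ j, X i j * Y i j).re := by
  refine le_of_forall_pos_le_add fun ε hε => ?_
  have hN : (0 : ℝ) < n + 1 := by positivity
  set δ := ε / (n + 1) with hδ
  have hδ0 : 0 < δ := by positivity
  have := core_pos X Y (s + δ) (fun j => β j + δ) (by linarith)
    (fun j => by have := hβ j; linarith) hX (fun x y => by
      have h1 := h x y
      have h2 : 0 ≤ δ * ∑ i, ‖x i‖ ^ 2 := by positivity
      have h3 : 0 ≤ ∑ j, δ * ‖y j‖ ^ 2 := by positivity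
      simp only [add_mul, Finset.sum_add_distrib]
      linarith)
  rw [Finset.sum_add_distrib] at this
  simp only [Finset.sum_const, Finset.card_univ, Fintype.card_fin, nsmul_eq_mul] at this
  have h6 : δ * (n + 1) = ε := by rw [hδ]; field_simp
  linarith

/-- The real-linear pairing. -/
noncomputable def pr {K : Type*} [Fintype K] (Z : Matrix K K ℂ) : Matrix K K ℂ →ₗ[ℝ] ℝ where
  toFun M := (∑ k, ∑ l, Z k l * M k l).re
  map_add' M N := by
    simp only [Matrix.add_apply, mul_add, Finset.sum_add_distrib, Complex.add_re]
  map_smul' r M := by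
    simp only [Matrix.smul_apply, Complex.real_smul, RingHom.id_apply, smul_eq_mul]
    rw [← Complex.re_ofReal_mul]
    simp only [Finset.mul_sum]
    congr 1
    refine Finset.sum_congr rfl fun k _ => Finset.sum_congr rfl fun l _ => ?_
    ring

/-- The cone of accretive matrices. -/
noncomputable def accr (K : Type*) [Fintype K] : PointedCone ℝ (Matrix K K ℂ) where
  carrier := {M | ∀ v : K → ℂ, 0 ≤ (star v ⬝ᵥ (M *ᵥ v)).re}
  add_mem' := by
    intro M N hM hN v
    have h1 := hM v
    have h2 := hN v
    rw [Matrix.add_mulVec, dotProduct_add, Complex.add_re]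
    linarith
  zero_mem' := by
    intro v; simp
  smul_mem' := by
    intro c M hM v
    have h1 := hM v
    have e : (c • M) *ᵥ v = ((c : ℝ) : ℂ) • (M *ᵥ v) := by
      rw [← Matrix.smul_mulVec]
      congr 1
    rw [e, dotProduct_smul, smul_eq_mul, Complex.re_ofReal_mul]
    exact mul_nonneg c.2 h1

lemma mem_accr {K : Type*} [Fintype K] {M : Matrix K K ℂ} :
    M ∈ accr K ↔ ∀ v : K → ℂ, 0 ≤ (star v ⬝ᵥ (M *ᵥ v)).re := Iff.rfl

lemma quad_expand {K : Type*} [Fintype K] (M : Matrix K K ℂ) (v : K → ℂ) :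
    star v ⬝ᵥ (M *ᵥ v) = ∑ k, ∑ l, star (v k) * M k l * v l := by
  simp only [dotProduct, mulVec, Finset.mul_sum, Pi.star_apply, mul_assoc]

lemma accr_dense {K : Type*} [Fintype K] [DecidableEq K] (M : Matrix K K ℂ) :
    (∑ k, ∑ l, ‖M k l‖) • (1 : Matrix K K ℂ) + M ∈ accr K := by
  intro v
  set c := ∑ k, ∑ l, ‖M k l‖
  have e1 : (c • (1 : Matrix K K ℂ)) *ᵥ v = (c : ℂ) • v := by
    rw [Matrix.smul_mulVec, Matrix.one_mulVec]
    rfl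
  have e2 : (star v ⬝ᵥ v) = ((∑ k, ‖v k‖ ^ 2 : ℝ) : ℂ) := by
    simp only [dotProduct, Pi.star_apply, RCLike.star_def, Complex.conj_mul']
    push_cast; rfl
  rw [Matrix.add_mulVec, dotProduct_add, e1, dotProduct_smul, e2, Complex.add_re, smul_eq_mul,
    Complex.re_ofReal_mul, Complex.ofReal_re]
  set T := ∑ k, ‖v k‖ ^ 2
  have h1 : ‖star v ⬝ᵥ (M *ᵥ v)‖ ≤ c * T := by
    rw [quad_expand, Finset.sum_mul]
    refine (norm_sum_le _ _).trans (Finset.sum_le_sum fun k _ => ?_)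
    rw [Finset.sum_mul]
    refine (norm_sum_le _ _).trans (Finset.sum_le_sum fun l _ => ?_)
    rw [norm_mul, norm_mul, norm_star]
    have hk : ‖v k‖ ^ 2 ≤ T := Finset.single_le_sum (f := fun k => ‖v k‖ ^ 2)
      (fun _ _ => sq_nonneg _) (Finset.mem_univ k)
    have hl : ‖v l‖ ^ 2 ≤ T := Finset.single_le_sum (f := fun k => ‖v k‖ ^ 2)
      (fun _ _ => sq_nonneg _) (Finset.mem_univ l)
    have hkl : ‖v k‖ * ‖v l‖ ≤ T := by nlinarith [sq_nonneg (‖v k‖ - ‖v l‖)]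
    calc ‖v k‖ * ‖M k l‖ * ‖v l‖ = ‖M k l‖ * (‖v k‖ * ‖v l‖) := by ring
      _ ≤ ‖M k l‖ * T := by gcongr
  have h2 := (abs_le.1 (Complex.abs_re_le_norm (star v ⬝ᵥ (M *ᵥ v)))).1
  linarith

lemma exists_pr {K : Type*} [Fintype K] [DecidableEq K] (g : Matrix K K ℂ →ₗ[ℝ] ℝ) :
    ∃ Z, g = pr Z := by
  refine ⟨Matrix.of fun k l => ⟨g (Matrix.single k l 1), -g (Matrix.single k l Complex.I)⟩, ?_⟩
  ext M
  have e : ∀ k l, Matrix.single k l (M k l) = (M k l).re • Matrix.single k l (1 : ℂ) +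
      (M k l).im • Matrix.single k l Complex.I := by
    intro k l
    rw [Matrix.smul_single, Matrix.smul_single, ← Matrix.single_add]
    congr 1
    apply Complex.ext <;> simp
  conv_lhs => rw [Matrix.matrix_eq_sum_single M]
  simp only [map_sum, pr, LinearMap.coe_mk, AddHom.coe_mk, Complex.re_sum]
  refine Finset.sum_congr rfl fun k _ => Finset.sum_congr rfl fun l _ => ?_
  rw [e, map_add, map_smul, map_smul, Matrix.of_apply, Complex.mul_re, smul_eq_mul, smul_eq_mul]
  ring

lemma pr_single {K : Type*} [Fintype K] [DecidableEq K] (Z : Matrix K K ℂ) (k l : K) (c : ℂ) :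
    pr Z (Matrix.single k l c) = (Z k l * c).re := by
  simp only [pr, LinearMap.coe_mk, AddHom.coe_mk]
  congr 1
  rw [Finset.sum_eq_single k, Finset.sum_eq_single l]
  · simp
  · intro b _ hb; simp [hb.symm]
  · simp
  · intro b _ hb; simp [hb.symm]
  · simp

open scoped ComplexOrder in
lemma exists_psd {K : Type*} [Fintype K] [DecidableEq K] (V : Submodule ℝ (Matrix K K ℂ))
    (h1 : (1 : Matrix K K ℂ) ∈ V) (Z₀ : Matrix K K ℂ)
    (h : ∀ M ∈ V, M ∈ accr K → 0 ≤ pr Z₀ M) :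
    ∃ (Z : Matrix K K ℂ) (N : ℕ) (w : K → EuclideanSpace ℂ (Fin N)),
      (∀ k l, Z k l = inner ℂ (w k) (w l)) ∧ ∀ M ∈ V, pr Z M = pr Z₀ M := by
  obtain ⟨g, hg1, hg2⟩ := riesz_extension (accr K) ⟨V, (pr Z₀).domRestrict V⟩
    (fun x hx => h x x.2 hx)
    (fun y => ⟨⟨(∑ k, ∑ l, ‖y k l‖) • (1 : Matrix K K ℂ), V.smul_mem _ h1⟩, accr_dense y⟩)
  obtain ⟨Z, rfl⟩ := exists_pr g
  have hskew : ∀ k l c, (Z k l * c).re = (Z l k * star c).re := by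
    intro k l c
    have hz : ∀ v : K → ℂ, (star v ⬝ᵥ ((Matrix.single k l c - Matrix.single l k (star c)) *ᵥ v)).re
        = 0 := by
      intro v
      rw [quad_expand]
      have e1 : ∀ (k l : K) (c : ℂ), ∑ a, ∑ b, star (v a) * Matrix.single k l c a b * v b =
          star (v k) * c * v l := by
        intro k l c
        rw [Finset.sum_eq_single k, Finset.sum_eq_single l]
        · simp
        · intro b _ hb; simp [hb.symm]
        · simp
        · intro b _ hb; simp [hb.symm]
        · simp
      simp only [Matrix.sub_apply, mul_sub, sub_mul, Finset.sum_sub_distrib]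
      rw [e1, e1]
      simp
      ring
    have a1 := hg2 (Matrix.single k l c - Matrix.single l k (star c))
      (fun v => (hz v).ge)
    have a2 := hg2 (-(Matrix.single k l c - Matrix.single l k (star c)))
      (fun v => by
        rw [Matrix.neg_mulVec, dotProduct_neg, Complex.neg_re, hz v, neg_zero])
    rw [map_neg] at a2
    rw [map_sub, pr_single, pr_single] at a1 a2
    linarith
  have hH : Z.IsHermitian := by
    ext k l
    rw [Matrix.conjTranspose_apply]
    have b1 := hskew k l 1
    have b2 := hskew k l Complex.I
    simp at b1 b2
    apply Complex.ext
    · simp [b1]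
    · simp [← b2]
  suffices hP : Z.PosSemidef by
    obtain ⟨N, v, hv⟩ := Matrix.posSemidef_iff_eq_sum_vecMulVec.1 hP
    refine ⟨Z, N, fun k => WithLp.toLp 2 (fun t => star (v t k)), fun k l => ?_,
      fun M hM => hg1 ⟨M, hM⟩⟩
    rw [hv, Matrix.sum_apply, PiLp.inner_apply]
    refine Finset.sum_congr rfl fun t _ => ?_
    simp [Matrix.vecMulVec_apply, mul_comm]
  refine Matrix.PosSemidef.of_dotProduct_mulVec_nonneg hH fun x => ?_
  have hre : 0 ≤ (star x ⬝ᵥ (Z *ᵥ x)).re := by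
    have := hg2 (Matrix.vecMulVec (star x) x) (by
      intro v
      have : (star v ⬝ᵥ (Matrix.vecMulVec (star x) x *ᵥ v)) = star (x ⬝ᵥ v) * (x ⬝ᵥ v) := by
        rw [Matrix.vecMulVec_mulVec, dotProduct_smul, ← Matrix.star_dotProduct_star]
        simp [dotProduct_comm]
      rw [this, RCLike.star_def, Complex.conj_mul', ← Complex.ofReal_pow, Complex.ofReal_re]
      positivity)
    rw [quad_expand]
    convert this using 1
    simp only [pr, LinearMap.coe_mk, AddHom.coe_mk, Matrix.vecMulVec_apply, Pi.star_apply]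
    congr 1
    refine Finset.sum_congr rfl fun k _ => Finset.sum_congr rfl fun l _ => ?_
    ring
  have him : (star x ⬝ᵥ (Z *ᵥ x)).im = 0 := by
    simpa using hH.im_star_dotProduct_mulVec_self x
  rw [Complex.le_def]
  exact ⟨by simpa using hre, by simpa using him.symm⟩

lemma pr_blocks {m n : ℕ} (X : Matrix (Fin m) (Fin n) ℂ) (r : ℂ)
    (M : Matrix (Fin m ⊕ Fin n) (Fin m ⊕ Fin n) ℂ) :
    pr (Matrix.fromBlocks (r • 1) X Xᴴ 1) M =
      (r * ∑ i, M (Sum.inl i) (Sum.inl i)).re + (∑ j, M (Sum.inr j) (Sum.inr j)).re +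
      (∑ i, ∑ j, X i j * M (Sum.inl i) (Sum.inr j)).re +
      (∑ i, ∑ j, star (X i j) * M (Sum.inr j) (Sum.inl i)).re := by
  simp only [pr, LinearMap.coe_mk, AddHom.coe_mk, Fintype.sum_sum_type, Finset.sum_add_distrib,
    Complex.add_re, Matrix.fromBlocks_apply₁₁, Matrix.fromBlocks_apply₁₂,
    Matrix.fromBlocks_apply₂₁, Matrix.fromBlocks_apply₂₂, Matrix.smul_apply, Matrix.one_apply,
    Matrix.conjTranspose_apply, smul_eq_mul, mul_ite, ite_mul, mul_one, mul_zero, zero_mul,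
    one_mul, Finset.sum_ite_eq, Finset.mem_univ, if_true]
  rw [Finset.sum_comm (s := (Finset.univ : Finset (Fin n))), Finset.mul_sum]
  ring

/-- The subspace of matrices with scalar first diagonal block, diagonal second diagonal block. -/
def blockSub (m n : ℕ) : Submodule ℝ (Matrix (Fin m ⊕ Fin n) (Fin m ⊕ Fin n) ℂ) where
  carrier := {M | (∃ c : ℂ, ∀ i i', M (Sum.inl i) (Sum.inl i') = if i = i' then c else 0) ∧
    ∀ j j', j ≠ j' → M (Sum.inr j) (Sum.inr j') = 0}
  add_mem' := by
    rintro M N ⟨⟨c, hc⟩, h1⟩ ⟨⟨d, hd⟩, h2⟩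
    refine ⟨⟨c + d, fun i i' => ?_⟩, fun j j' hj => ?_⟩
    · rw [Matrix.add_apply, hc, hd]; split_ifs <;> simp
    · rw [Matrix.add_apply, h1 j j' hj, h2 j j' hj, add_zero]
  zero_mem' := ⟨⟨0, fun i i' => by simp⟩, fun j j' _ => rfl⟩
  smul_mem' := by
    rintro r M ⟨⟨c, hc⟩, h1⟩
    refine ⟨⟨r • c, fun i i' => ?_⟩, fun j j' hj => ?_⟩
    · rw [Matrix.smul_apply, hc]; split_ifs <;> simp
    · rw [Matrix.smul_apply, h1 j j' hj, smul_zero]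

lemma block_nonneg {m n : ℕ} (hm : 0 < m) (X : Matrix (Fin m) (Fin n) ℂ)
    (hX : ∀ B : Matrix (Fin m) (Fin n) ℂ, opNorm B ≤ 1 → ∑ j, ‖∑ i, X i j * B i j‖ ^ 2 ≤ 1)
    (M : Matrix (Fin m ⊕ Fin n) (Fin m ⊕ Fin n) ℂ) (hM : M ∈ blockSub m n)
    (hA : M ∈ accr (Fin m ⊕ Fin n)) :
    0 ≤ pr (Matrix.fromBlocks (((m : ℂ)⁻¹) • 1) X Xᴴ 1) M := by
  obtain ⟨⟨c, hc⟩, h1⟩ := hM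
  have hm' : (m : ℂ) ≠ 0 := by exact_mod_cast hm.ne'
  set Y : Matrix (Fin m) (Fin n) ℂ := Matrix.of fun i j =>
    (M (Sum.inl i) (Sum.inr j) + star (M (Sum.inr j) (Sum.inl i))) / 2 with hY
  have hq : ∀ (x : Fin m → ℂ) (y : Fin n → ℂ), 0 ≤ c.re * ∑ i, ‖x i‖ ^ 2 +
      ∑ j, (M (Sum.inr j) (Sum.inr j)).re * ‖y j‖ ^ 2 +
      2 * (∑ i, star (x i) * (Y *ᵥ y) i).re := by
    intro x y
    have h2 := hA (Sum.elim x y)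
    rw [quad_expand] at h2
    simp only [Fintype.sum_sum_type, Sum.elim_inl, Sum.elim_inr, Finset.sum_add_distrib, hc,
      Complex.add_re] at h2
    have e1 : (∑ i, ∑ i', star (x i) * (if i = i' then c else 0) * x i').re =
        c.re * ∑ i, ‖x i‖ ^ 2 := by
      have : ∑ i, ∑ i', star (x i) * (if i = i' then c else 0) * x i' =
          ((∑ i, ‖x i‖ ^ 2 : ℝ) : ℂ) * c := by
        push_cast
        rw [Finset.sum_mul]
        refine Finset.sum_congr rfl fun i _ => ?_
        simp only [mul_ite, ite_mul, mul_zero, zero_mul, Finset.sum_ite_eq, Finset.mem_univ,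
          if_true]
        rw [← Complex.conj_mul', RCLike.star_def]
        ring
      rw [this, Complex.re_ofReal_mul]
      ring
    have e2 : (∑ j, ∑ j', star (y j) * M (Sum.inr j) (Sum.inr j') * y j').re =
        ∑ j, (M (Sum.inr j) (Sum.inr j)).re * ‖y j‖ ^ 2 := by
      rw [Complex.re_sum]
      refine Finset.sum_congr rfl fun j _ => ?_
      rw [Finset.sum_eq_single j]
      · have : star (y j) * M (Sum.inr j) (Sum.inr j) * y j =
            ((‖y j‖ ^ 2 : ℝ) : ℂ) * M (Sum.inr j) (Sum.inr j) := by
          push_cast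
          rw [← Complex.conj_mul', RCLike.star_def]
          ring
        rw [this, Complex.re_ofReal_mul]
        ring
      · intro b _ hb
        rw [h1 j b hb.symm]; simp
      · simp
    have e3 : 2 * (∑ i, star (x i) * (Y *ᵥ y) i).re =
        (∑ i, ∑ j, star (x i) * M (Sum.inl i) (Sum.inr j) * y j).re +
        (∑ j, ∑ i, star (y j) * M (Sum.inr j) (Sum.inl i) * x i).re := by
      rw [Finset.sum_comm (s := (Finset.univ : Finset (Fin n)))]
      simp only [mulVec, dotProduct, Finset.mul_sum, Complex.re_sum, ← Finset.sum_add_distrib]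
      refine Finset.sum_congr rfl fun i _ => Finset.sum_congr rfl fun j _ => ?_
      have : (star (y j) * M (Sum.inr j) (Sum.inl i) * x i).re =
          (star (x i) * star (M (Sum.inr j) (Sum.inl i)) * y j).re := by
        rw [← Complex.conj_re]
        congr 1
        simp
        ring
      rw [this, ← Complex.add_re]
      have e : star (x i) * M (Sum.inl i) (Sum.inr j) * y j +
          star (x i) * star (M (Sum.inr j) (Sum.inl i)) * y j =
          ((2 : ℝ) : ℂ) * (star (x i) * (Y i j * y j)) := by
        rw [hY, Matrix.of_apply]
        push_cast
        ring
      rw [e, Complex.re_ofReal_mul]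
    rw [e1, e2] at h2
    rw [e3]
    linarith
  have hc0 : 0 ≤ c.re := by
    have := hq (Pi.single ⟨0, hm⟩ 1) 0
    rw [Finset.sum_eq_single ⟨0, hm⟩] at this
    · simpa using this
    · intro b _ hb; simp [hb]
    · simp
  have hβ0 : ∀ j, 0 ≤ (M (Sum.inr j) (Sum.inr j)).re := by
    intro j
    have := hq 0 (Pi.single j 1)
    rw [Finset.sum_eq_single (a := j) (s := (Finset.univ : Finset (Fin n)))] at this
    · simpa using this
    · intro b _ hb; simp [hb]
    · simp
  have hfin := core_nonneg X Y c.re (fun j => (M (Sum.inr j) (Sum.inr j)).re) hc0 hβ0 hX hq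
  rw [pr_blocks]
  have e4 : ((m : ℂ)⁻¹ * ∑ i, M (Sum.inl i) (Sum.inl i)) = c := by
    simp only [hc, if_true, Finset.sum_const, Finset.card_univ, Fintype.card_fin, nsmul_eq_mul]
    field_simp
  have e5 : 2 * (∑ i, ∑ j, X i j * Y i j).re =
      (∑ i, ∑ j, X i j * M (Sum.inl i) (Sum.inr j)).re +
      (∑ i, ∑ j, star (X i j) * M (Sum.inr j) (Sum.inl i)).re := by
    simp only [Finset.mul_sum, Complex.re_sum, ← Finset.sum_add_distrib]
    refine Finset.sum_congr rfl fun i _ => Finset.sum_congr rfl fun j _ => ?_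
    have : (star (X i j) * M (Sum.inr j) (Sum.inl i)).re =
        (X i j * star (M (Sum.inr j) (Sum.inl i))).re := by
      rw [← Complex.conj_re]
      congr 1
      simp
    rw [this, ← Complex.add_re]
    have e : X i j * M (Sum.inl i) (Sum.inr j) + X i j * star (M (Sum.inr j) (Sum.inl i)) =
        ((2 : ℝ) : ℂ) * (X i j * Y i j) := by
      rw [hY, Matrix.of_apply]
      push_cast
      ring
    rw [e, Complex.re_ofReal_mul]
  rw [e4, Complex.re_sum (f := fun j => M (Sum.inr j) (Sum.inr j))]
  linarith

lemma forward {m n : ℕ} (hm : 0 < m) (X : Matrix (Fin m) (Fin n) ℂ)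
    (hX : ∀ B : Matrix (Fin m) (Fin n) ℂ, opNorm B ≤ 1 → ∑ j, ‖∑ i, X i j * B i j‖ ^ 2 ≤ 1) :
    ∃ (N : ℕ) (x : Fin m → EuclideanSpace ℂ (Fin N)) (y : Fin n → EuclideanSpace ℂ (Fin N)),
      ∑ i, ‖x i‖ ^ 2 ≤ 1 ∧ (∀ j, ‖y j‖ ^ 2 ≤ 1) ∧ ∀ i j, X i j = inner ℂ (x i) (y j) := by
  have hm' : (m : ℂ) ≠ 0 := by exact_mod_cast hm.ne'
  obtain ⟨Z, N, w, hw, hV⟩ := exists_psd (blockSub m n)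
    ⟨⟨1, fun i i' => by simp [Matrix.one_apply]⟩, fun j j' hj => by simp [Matrix.one_apply, hj]⟩
    _ (block_nonneg hm X hX)
  have hn : ∀ k, ‖w k‖ ^ 2 = (Z k k).re := by
    intro k
    rw [hw, inner_self_eq_norm_sq_to_K]
    norm_cast
  refine ⟨N, fun i => w (Sum.inl i), fun j => w (Sum.inr j), le_of_eq ?_, fun j => le_of_eq ?_,
    fun i j => ?_⟩
  · have := hV (∑ i : Fin m, Matrix.single (Sum.inl i) (Sum.inl i) 1) (by
      refine ⟨⟨1, fun i i' => ?_⟩, fun j j' hj => ?_⟩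
      · rw [Matrix.sum_apply]
        by_cases h : i = i'
        · subst h
          simp [Matrix.single_apply]
        · rw [if_neg h]
          refine Finset.sum_eq_zero fun k _ => ?_
          rw [Matrix.single_apply, if_neg]
          rintro ⟨h1, h2⟩
          exact h (Sum.inl_injective (h1.symm.trans h2))
      · rw [Matrix.sum_apply]
        simp [Matrix.single_apply])
    rw [map_sum, map_sum] at this
    simp only [pr_single, mul_one, Matrix.fromBlocks_apply₁₁, Matrix.smul_apply,
      Matrix.one_apply_eq, smul_eq_mul] at this
    simp only [hn]
    rw [this, ← Complex.re_sum]
    simp [hm']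
  · rw [hn]
    have := hV (Matrix.single (Sum.inr j) (Sum.inr j) 1) (by
      refine ⟨⟨0, fun i i' => by simp [Matrix.single_apply]⟩, fun a b hab => ?_⟩
      rw [Matrix.single_apply, if_neg]
      rintro ⟨h1, h2⟩
      exact hab (Sum.inr_injective (h1.symm.trans h2)))
    simpa [pr_single] using this
  · rw [← hw]
    have key : ∀ c : ℂ, (Z (Sum.inl i) (Sum.inr j) * c).re = (X i j * c).re := by
      intro c
      have := hV (Matrix.single (Sum.inl i) (Sum.inr j) c)
        ⟨⟨0, fun i i' => by simp [Matrix.single_apply]⟩,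
          fun a b hab => by simp [Matrix.single_apply]⟩
      simpa only [pr_single, Matrix.fromBlocks_apply₁₂] using this
    have k1 := key 1
    have k2 := key Complex.I
    simp at k1 k2
    exact Complex.ext k1.symm k2.symm

/-- `‖T_X‖ ≤ 1` iff `X = Δ_m(γ) Lᴴ R` with `‖γ‖₂ ≤ 1`, `‖L‖_c ≤ 1`, `‖R‖_c ≤ 1`,
where the inner dimension can be taken to be `min m n`. -/
theorem TxNorm_le_one_iff_exists_factorization
    (m n : ℕ) (X : Matrix (Fin m) (Fin n) ℂ) :
    TxNorm X ≤ 1 ↔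
      ∃ (γ : Fin m → ℂ) (L : Matrix (Fin (min m n)) (Fin m) ℂ)
        (R : Matrix (Fin (min m n)) (Fin n) ℂ),
        eNorm γ ≤ 1 ∧ colNorm L ≤ 1 ∧ colNorm R ≤ 1 ∧
        X = Matrix.diagonal γ * (Lᴴ * R) := by
  rw [TxNorm_le_one_iff]
  constructor
  · intro h
    have hX : ∀ B : Matrix (Fin m) (Fin n) ℂ, opNorm B ≤ 1 →
        ∑ j, ‖∑ i, X i j * B i j‖ ^ 2 ≤ 1 := by
      intro B hB
      simpa using h (fun _ => 1) B (by simp) hB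
    rcases Nat.eq_zero_or_pos m with hm | hm
    · subst hm
      exact factor_of_vectors (E := ℂ) X (fun _ => 0) (fun _ => 0) (by simp) (by simp)
        (fun i => i.elim0)
    · obtain ⟨N, x, y, h1, h2, h3⟩ := forward hm X hX
      exact factor_of_vectors X x y h1 h2 h3
  · rintro ⟨γ, L, R, hγ, hL, hR, rfl⟩ a B ha hB
    exact backward γ L R ((eNorm_le_one_iff _).1 hγ) ((colNorm_le_one_iff _).1 hL)
      ((colNorm_le_one_iff _).1 hR) a B ha hB
end

section
/- Let X be an m×n complex matrix. Then the following are equivalent: (1) for every natural number l, every l×m complex matrix L with ‖L‖_c ≤ 1, and every l×n complex matrix R with ‖R‖_c ≤ 1, one has |Tr((Lᴴ R)ᴴ X)| ≤ 1; (2) there exist η ∈ ℂᵐ, ξ ∈ ℂⁿ, and an m×n complex matrix C such that X = Δ_m(η)ᴴ C Δ_n(ξ) and ‖η‖₂ · ‖C‖_∞ · ‖ξ‖₂ ≤ 1. (This expresses that the unit ball for the completely bounded bilinear-form norm is the polar of the unit ball for the Schur multiplier norm with respect to the pairing ⟨X,Y⟩ = Tr(YᴴX).) -/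
open Matrix BigOperators

/-- The pairing written as a sum. -/
lemma trace_eq_sum {l m n : ℕ} (X : Matrix (Fin m) (Fin n) ℂ)
    (L : Matrix (Fin l) (Fin m) ℂ) (R : Matrix (Fin l) (Fin n) ℂ) :
    ((Lᴴ * R)ᴴ * X).trace = ∑ k, ∑ i, ∑ j, L k i * star (R k j) * X i j := by
  simp only [Matrix.conjTranspose_mul, Matrix.conjTranspose_conjTranspose, Matrix.trace,
    Matrix.diag_apply, Matrix.mul_apply, Matrix.conjTranspose_apply, Finset.sum_mul]
  rw [Finset.sum_comm' (t' := Finset.univ) (s' := fun _ => Finset.univ) (by simp)]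
  rw [Finset.sum_congr rfl (fun i _ => Finset.sum_comm)]
  rw [Finset.sum_comm]
  refine Finset.sum_congr rfl fun k _ => Finset.sum_congr rfl fun i _ =>
    Finset.sum_congr rfl fun j _ => by ring

lemma eNorm_eq {n : ℕ} (ξ : Fin n → ℂ) : eNorm ξ = ‖WithLp.toLp 2 ξ‖ := by
  rw [EuclideanSpace.norm_eq]; rfl

lemma bilin_le {m n : ℕ} (C : Matrix (Fin m) (Fin n) ℂ) (u : Fin m → ℂ) (v : Fin n → ℂ) :
    ‖∑ i, ∑ j, star (u i) * C i j * v j‖ ≤ eNorm u * (opNorm C * eNorm v) := by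
  have h1 : (∑ i, ∑ j, star (u i) * C i j * v j) =
      inner ℂ (WithLp.toLp 2 u) ((Matrix.toEuclideanLin C).toContinuousLinearMap
        (WithLp.toLp 2 v)) := by
    simp [PiLp.inner_apply, Matrix.toLpLin_apply, Matrix.mulVec, dotProduct,
      Finset.mul_sum, mul_comm, mul_left_comm]
    exact Finset.sum_congr rfl fun i _ => Finset.sum_congr rfl fun j _ => by ring
  rw [h1, eNorm_eq, eNorm_eq]
  refine (norm_inner_le_norm _ _).trans ?_
  gcongr
  exact ContinuousLinearMap.le_opNorm _ _

lemma easy_direction {l m n : ℕ} (L : Matrix (Fin l) (Fin m) ℂ) (R : Matrix (Fin l) (Fin n) ℂ)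
    (hL : colNorm L ≤ 1) (hR : colNorm R ≤ 1) (η : Fin m → ℂ) (ξ : Fin n → ℂ)
    (C : Matrix (Fin m) (Fin n) ℂ) (h : eNorm η * opNorm C * eNorm ξ ≤ 1) :
    ‖((Lᴴ * R)ᴴ * ((Matrix.diagonal η)ᴴ * C * Matrix.diagonal ξ)).trace‖ ≤ 1 := by
  rw [colNorm_le_one_iff] at hL hR
  rw [trace_eq_sum]
  have hC : 0 ≤ opNorm C := norm_nonneg _
  have key : ∀ {p : ℕ} (ζ : Fin p → ℂ) (M : Matrix (Fin l) (Fin p) ℂ),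
      (∀ j, ∑ i, ‖M i j‖ ^ 2 ≤ 1) →
      √(∑ k, eNorm (fun j => star (M k j) * ζ j) ^ 2) ≤ eNorm ζ := by
    intro p ζ M hM
    unfold eNorm
    apply Real.sqrt_le_sqrt
    have : ∀ k, √(∑ j, ‖star (M k j) * ζ j‖ ^ 2) ^ 2 = ∑ j, ‖M k j‖ ^ 2 * ‖ζ j‖ ^ 2 := by
      intro k
      rw [Real.sq_sqrt (by positivity)]
      simp [mul_pow]
    rw [Finset.sum_congr rfl (fun k _ => this k), Finset.sum_comm]
    refine Finset.sum_le_sum fun j _ => ?_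
    rw [← Finset.sum_mul]
    exact mul_le_of_le_one_left (by positivity) (hM j)
  calc _ = ‖∑ k, ∑ i, ∑ j, star (star (L k i) * η i) * C i j * (star (R k j) * ξ j)‖ := by
        congr 1
        refine Finset.sum_congr rfl fun k _ => Finset.sum_congr rfl fun i _ =>
          Finset.sum_congr rfl fun j _ => ?_
        simp [Matrix.diagonal_conjTranspose]
        ring
    _ ≤ ∑ k, eNorm (fun i => star (L k i) * η i) *
          (opNorm C * eNorm (fun j => star (R k j) * ξ j)) :=
        (norm_sum_le _ _).trans (Finset.sum_le_sum fun k _ =>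
          bilin_le C (fun i => star (L k i) * η i) (fun j => star (R k j) * ξ j))
    _ = opNorm C * ∑ k, eNorm (fun i => star (L k i) * η i) *
          eNorm (fun j => star (R k j) * ξ j) := by
        rw [Finset.mul_sum]
        exact Finset.sum_congr rfl fun k _ => by ring
    _ ≤ opNorm C * (eNorm η * eNorm ξ) := by
        gcongr
        refine (Real.sum_mul_le_sqrt_mul_sqrt _ _ _).trans ?_
        exact mul_le_mul (key η L hL) (key ξ R hR) (Real.sqrt_nonneg _) (Real.sqrt_nonneg _)
    _ ≤ 1 := by linarith [mul_comm (eNorm η) (opNorm C), mul_assoc (opNorm C) (eNorm η) (eNorm ξ), congrArg (· * eNorm ξ) (mul_comm (eNorm η) (opNorm C))]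

/-- The trace form. -/
noncomputable def tform {l m n : ℕ} (X : Matrix (Fin m) (Fin n) ℂ)
    (A : Fin l → Fin m → ℂ) (B : Fin l → Fin n → ℂ) : ℂ :=
  ∑ k, ∑ i, ∑ j, A k i * star (B k j) * X i j

lemma tform_smul {l m n : ℕ} (X : Matrix (Fin m) (Fin n) ℂ)
    (A : Fin l → Fin m → ℂ) (B : Fin l → Fin n → ℂ) (s t : ℝ) :
    tform X (fun k i => (s : ℂ) * A k i) (fun k j => (t : ℂ) * B k j)
      = ((s * t : ℝ) : ℂ) * tform X A B := by
  unfold tform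
  simp only [Finset.mul_sum]
  refine Finset.sum_congr rfl fun k _ => Finset.sum_congr rfl fun i _ =>
    Finset.sum_congr rfl fun j _ => ?_
  simp
  ring

/-- The cone to be separated from the negative orthant. -/
def coneD {m n : ℕ} (X : Matrix (Fin m) (Fin n) ℂ) : Set (Fin m × Fin n → ℝ) :=
  {w | ∃ (l : ℕ) (A : Fin l → Fin m → ℂ) (B : Fin l → Fin n → ℂ),
    w = fun ij => ∑ k, ‖A k ij.1‖ ^ 2 + ∑ k, ‖B k ij.2‖ ^ 2 - 2 * (tform X A B).re}

lemma coneD_add {m n : ℕ} {X : Matrix (Fin m) (Fin n) ℂ} {w w' : Fin m × Fin n → ℝ}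
    (h : w ∈ coneD X) (h' : w' ∈ coneD X) : w + w' ∈ coneD X := by
  obtain ⟨l, A, B, rfl⟩ := h
  obtain ⟨l', A', B', rfl⟩ := h'
  refine ⟨l + l', Fin.append A A', Fin.append B B', ?_⟩
  funext ij
  simp only [tform, Fin.sum_univ_add, Fin.append_left, Fin.append_right, Pi.add_apply,
    Complex.add_re]
  ring

lemma coneD_smul {m n : ℕ} {X : Matrix (Fin m) (Fin n) ℂ} {w : Fin m × Fin n → ℝ}
    (h : w ∈ coneD X) {c : ℝ} (hc : 0 ≤ c) : c • w ∈ coneD X := by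
  obtain ⟨l, A, B, rfl⟩ := h
  refine ⟨l, fun k i => ((√c : ℝ) : ℂ) * A k i, fun k i => ((√c : ℝ) : ℂ) * B k i, ?_⟩
  funext ij
  rw [tform_smul, Real.mul_self_sqrt hc, Complex.re_ofReal_mul]
  simp only [norm_mul, mul_pow, ← Finset.mul_sum, Complex.norm_real, Real.norm_eq_abs, sq_abs,
    Real.sq_sqrt hc, Pi.smul_apply, smul_eq_mul]
  ring

lemma tform_le {l m n : ℕ} {X : Matrix (Fin m) (Fin n) ℂ}
    (hX : ∀ (l : ℕ) (L : Matrix (Fin l) (Fin m) ℂ) (R : Matrix (Fin l) (Fin n) ℂ),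
        colNorm L ≤ 1 → colNorm R ≤ 1 → ‖((Lᴴ * R)ᴴ * X).trace‖ ≤ 1)
    (A : Fin l → Fin m → ℂ) (B : Fin l → Fin n → ℂ) {s t : ℝ} (hs : 0 < s) (ht : 0 < t)
    (hA : ∀ i, ∑ k, ‖A k i‖ ^ 2 ≤ s) (hB : ∀ i, ∑ k, ‖B k i‖ ^ 2 ≤ t) :
    2 * (tform X A B).re ≤ s + t := by
  have h := hX l (Matrix.of fun k i => ((√s⁻¹ : ℝ) : ℂ) * A k i)
    (Matrix.of fun k i => ((√t⁻¹ : ℝ) : ℂ) * B k i) ?_ ?_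
  · rw [trace_eq_sum] at h
    change ‖tform X (fun k i => ((√s⁻¹ : ℝ) : ℂ) * A k i)
      (fun k i => ((√t⁻¹ : ℝ) : ℂ) * B k i)‖ ≤ 1 at h
    rw [tform_smul, norm_mul, Complex.norm_real, Real.norm_eq_abs, abs_of_nonneg (by positivity),
      Real.sqrt_inv, Real.sqrt_inv, ← mul_inv, inv_mul_le_iff₀ (by positivity), mul_one] at h
    have h2 := (Complex.re_le_norm _).trans h
    nlinarith [sq_nonneg (√s - √t), Real.sq_sqrt hs.le, Real.sq_sqrt ht.le]
  · rw [colNorm_le_one_iff]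
    intro j
    simp only [Matrix.of_apply, norm_mul, mul_pow, ← Finset.mul_sum, Complex.norm_real,
      Real.norm_eq_abs, sq_abs, Real.sq_sqrt (inv_nonneg.mpr hs.le)]
    rw [inv_mul_le_iff₀ hs, mul_one]
    exact hA j
  · rw [colNorm_le_one_iff]
    intro j
    simp only [Matrix.of_apply, norm_mul, mul_pow, ← Finset.mul_sum, Complex.norm_real,
      Real.norm_eq_abs, sq_abs, Real.sq_sqrt (inv_nonneg.mpr ht.le)]
    rw [inv_mul_le_iff₀ ht, mul_one]
    exact hB j

lemma coneD_disjoint {m n : ℕ} [Nonempty (Fin m)] [Nonempty (Fin n)]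
    {X : Matrix (Fin m) (Fin n) ℂ}
    (hX : ∀ (l : ℕ) (L : Matrix (Fin l) (Fin m) ℂ) (R : Matrix (Fin l) (Fin n) ℂ),
        colNorm L ≤ 1 → colNorm R ≤ 1 → ‖((Lᴴ * R)ᴴ * X).trace‖ ≤ 1)
    {w : Fin m × Fin n → ℝ} (hw : w ∈ coneD X) : ∃ ij, 0 ≤ w ij := by
  obtain ⟨l, A, B, rfl⟩ := hw
  obtain ⟨i, hi⟩ := Finite.exists_max (fun i => ∑ k, ‖A k i‖ ^ 2)
  obtain ⟨j, hj⟩ := Finite.exists_max (fun j => ∑ k, ‖B k j‖ ^ 2)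
  refine ⟨(i, j), ?_⟩
  by_contra! hneg
  simp only at hneg
  have hi0 : 0 ≤ ∑ k, ‖A k i‖ ^ 2 := by positivity
  have hj0 : 0 ≤ ∑ k, ‖B k j‖ ^ 2 := by positivity
  set S := ∑ k, ‖A k i‖ ^ 2
  set V := ∑ k, ‖B k j‖ ^ 2
  set T := (tform X A B).re
  have := tform_le hX A B (s := S + (2 * T - S - V) / 4) (t := V + (2 * T - S - V) / 4)
    (by linarith) (by linarith) (fun i' => by have := hi i'; linarith)
    (fun i' => by have := hj i'; linarith)
  change 2 * T ≤ _ at this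
  linarith

lemma exists_weights {m n : ℕ} [Nonempty (Fin m)] [Nonempty (Fin n)]
    {X : Matrix (Fin m) (Fin n) ℂ}
    (hX : ∀ (l : ℕ) (L : Matrix (Fin l) (Fin m) ℂ) (R : Matrix (Fin l) (Fin n) ℂ),
        colNorm L ≤ 1 → colNorm R ≤ 1 → ‖((Lᴴ * R)ᴴ * X).trace‖ ≤ 1) :
    ∃ w : Fin m × Fin n → ℝ, (∀ ij, 0 ≤ w ij) ∧ ∑ ij, w ij = 1 ∧
      ∀ z ∈ coneD X, 0 ≤ ∑ ij, w ij * z ij := by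
  have hconv : Convex ℝ (coneD X) := by
    intro x hx y hy a b ha hb _
    exact coneD_add (coneD_smul hx ha) (coneD_smul hy hb)
  have hNopen : IsOpen (Set.pi Set.univ (fun _ : Fin m × Fin n => Set.Iio (0 : ℝ))) :=
    isOpen_set_pi Set.finite_univ (fun _ _ => isOpen_Iio)
  have hNconv : Convex ℝ (Set.pi Set.univ (fun _ : Fin m × Fin n => Set.Iio (0 : ℝ))) :=
    convex_pi (fun _ _ => convex_Iio 0)
  have hdisj : Disjoint (Set.pi Set.univ (fun _ : Fin m × Fin n => Set.Iio (0 : ℝ))) (coneD X) := by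
    rw [Set.disjoint_left]
    intro z hz hzD
    obtain ⟨ij, h⟩ := coneD_disjoint hX hzD
    exact absurd (hz ij trivial) (not_lt.mpr h)
  obtain ⟨f, s, hf1, hf2⟩ := geometric_hahn_banach_open hNconv hNopen hconv hdisj
  have h0D : (0 : Fin m × Fin n → ℝ) ∈ coneD X := by
    refine ⟨0, fun _ _ => 0, fun _ _ => 0, ?_⟩
    funext ij
    simp [tform]
  have hs0 : s ≤ 0 := by simpa using hf2 0 h0D
  have hfD : ∀ z ∈ coneD X, 0 ≤ f z := by
    intro z hz
    by_contra! hneg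
    have h1 := hf2 _ (coneD_smul hz (c := (1 - s) / (- f z)) (by
      apply div_nonneg <;> linarith))
    rw [map_smul, smul_eq_mul] at h1
    have : (1 - s) / (- f z) * f z = -(1 - s) := by
      rw [div_neg, neg_mul, div_mul_cancel₀ _ hneg.ne]
    linarith
  have hfsum : ∀ z, f z = ∑ ij, f (Pi.single ij 1) * z ij := by
    intro z
    conv_lhs => rw [← Finset.univ_sum_single z]
    rw [map_sum]
    refine Finset.sum_congr rfl fun ij _ => ?_
    have : (Pi.single ij (z ij) : Fin m × Fin n → ℝ) = z ij • Pi.single ij 1 := by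
      rw [← Pi.single_smul]; simp
    rw [this, map_smul, smul_eq_mul, mul_comm]
  have hf1' : f (fun _ => -1) < 0 := (hf1 _ (fun _ _ => by simp)).trans_le hs0
  have hpos : 0 < ∑ ij, f (Pi.single ij 1) := by
    rw [hfsum] at hf1'
    simpa using hf1'
  have hnn : ∀ ij, 0 ≤ f (Pi.single ij 1) := by
    intro ij
    by_contra! hneg
    set c := f (Pi.single ij 1) with hc
    set e := - c / (2 * ∑ ij, f (Pi.single ij 1)) with he
    have hepos : 0 < e := div_pos (by linarith) (by linarith)
    have h1 := (hf1 (- Pi.single ij 1 + e • (fun _ => -1)) (fun kl _ => by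
      have : (0:ℝ) ≤ (Pi.single ij 1 : Fin m × Fin n → ℝ) kl := by
        by_cases h : kl = ij
        · subst h; simp
        · simp [h]
      simp only [Pi.add_apply, Pi.neg_apply, Pi.smul_apply, smul_eq_mul, Set.mem_Iio]
      linarith)).trans_le hs0
    rw [map_add, map_neg, map_smul, hfsum (fun _ => -1), ← hc, ← Finset.sum_mul, smul_eq_mul] at h1
    have : e * ∑ ij, f (Pi.single ij 1) = - c / 2 := by
      rw [he]; field_simp
    nlinarith
  refine ⟨fun ij => f (Pi.single ij 1) / ∑ ij, f (Pi.single ij 1), fun ij =>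
    div_nonneg (hnn ij) hpos.le, ?_, ?_⟩
  · rw [← Finset.sum_div, div_self hpos.ne']
  · intro z hz
    have := hfD z hz
    rw [hfsum] at this
    simp only [div_mul_eq_mul_div, ← Finset.sum_div]
    exact div_nonneg this hpos.le

lemma exists_marginals {m n : ℕ} [Nonempty (Fin m)] [Nonempty (Fin n)]
    {X : Matrix (Fin m) (Fin n) ℂ}
    (hX : ∀ (l : ℕ) (L : Matrix (Fin l) (Fin m) ℂ) (R : Matrix (Fin l) (Fin n) ℂ),
        colNorm L ≤ 1 → colNorm R ≤ 1 → ‖((Lᴴ * R)ᴴ * X).trace‖ ≤ 1) :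
    ∃ (p : Fin m → ℝ) (q : Fin n → ℝ), (∀ i, 0 ≤ p i) ∧ (∀ j, 0 ≤ q j) ∧
      ∑ i, p i = 1 ∧ ∑ j, q j = 1 ∧
      ∀ (a : Fin m → ℂ) (b : Fin n → ℂ), 2 * (∑ i, ∑ j, a i * X i j * b j).re ≤
        ∑ i, p i * ‖a i‖ ^ 2 + ∑ j, q j * ‖b j‖ ^ 2 := by
  obtain ⟨w, hw0, hw1, hw⟩ := exists_weights hX
  refine ⟨fun i => ∑ j, w (i, j), fun j => ∑ i, w (i, j), fun i => Finset.sum_nonneg fun _ _ => hw0 _,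
    fun i => Finset.sum_nonneg fun _ _ => hw0 _, ?_, ?_, ?_⟩
  · rw [← hw1, Fintype.sum_prod_type]
  · rw [← hw1, Fintype.sum_prod_type_right]
  · intro a b
    have h := hw _ ⟨1, fun _ => a, fun _ j => star (b j), rfl⟩
    simp only [mul_sub, mul_add, Finset.sum_sub_distrib, Finset.sum_add_distrib] at h
    rw [← Finset.sum_mul, hw1, Fintype.sum_prod_type, Fintype.sum_prod_type_right] at h
    simp only [Finset.univ_unique, Finset.sum_singleton, norm_star, ← Finset.sum_mul, tform,
      star_star, one_mul] at h
    have e : (∑ i, ∑ j, a i * X i j * b j) = ∑ i, ∑ j, a i * b j * X i j :=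
      Finset.sum_congr rfl fun i _ => Finset.sum_congr rfl fun j _ => by ring
    rw [e]
    linarith

lemma entry_zero {m n : ℕ} {X : Matrix (Fin m) (Fin n) ℂ} {p : Fin m → ℝ} {q : Fin n → ℝ}
    (h : ∀ (a : Fin m → ℂ) (b : Fin n → ℂ), 2 * (∑ i, ∑ j, a i * X i j * b j).re ≤
        ∑ i, p i * ‖a i‖ ^ 2 + ∑ j, q j * ‖b j‖ ^ 2) (i : Fin m) (j : Fin n) (s t : ℝ) :
    2 * (s * t * ‖X i j‖ ^ 2) ≤ p i * s ^ 2 * ‖X i j‖ ^ 2 + q j * t ^ 2 := by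
  have h1 := h (Pi.single i ((s : ℂ) * star (X i j))) (Pi.single j (t : ℂ))
  have e : (∑ i', ∑ j', (Pi.single i ((s : ℂ) * star (X i j)) : Fin m → ℂ) i' * X i' j' *
      (Pi.single j (t : ℂ) : Fin n → ℂ) j') = ((s * t * ‖X i j‖ ^ 2 : ℝ) : ℂ) := by
    rw [Finset.sum_eq_single i, Finset.sum_eq_single j]
    · simp only [Pi.single_eq_same]
      push_cast
      rw [← Complex.mul_conj']
      simp only [Complex.star_def]
      ring
    · intro j' _ hj; simp [hj]
    · simp
    · intro i' _ hi; simp [hi]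
    · simp
  rw [e, Complex.ofReal_re, Finset.sum_eq_single i, Finset.sum_eq_single j] at h1
  · simpa [mul_pow, mul_assoc] using h1
  · intro j' _ hj; simp [hj]
  · simp
  · intro j' _ hj; simp [hj]
  · simp

lemma hard_direction {m n : ℕ} [Nonempty (Fin m)] [Nonempty (Fin n)]
    {X : Matrix (Fin m) (Fin n) ℂ}
    (hX : ∀ (l : ℕ) (L : Matrix (Fin l) (Fin m) ℂ) (R : Matrix (Fin l) (Fin n) ℂ),
        colNorm L ≤ 1 → colNorm R ≤ 1 → ‖((Lᴴ * R)ᴴ * X).trace‖ ≤ 1) :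
    ∃ (η : Fin m → ℂ) (ξ : Fin n → ℂ) (C : Matrix (Fin m) (Fin n) ℂ),
        X = (Matrix.diagonal η)ᴴ * C * Matrix.diagonal ξ ∧
        eNorm η * opNorm C * eNorm ξ ≤ 1 := by
  obtain ⟨p, q, hp, hq, hp1, hq1, h⟩ := exists_marginals hX
  have hz := entry_zero h
  have hnorm : ∀ {k : ℕ} (r : Fin k → ℝ), (∀ i, 0 ≤ r i) → ∑ i, r i = 1 →
      eNorm (fun i => ((√(r i) : ℝ) : ℂ)) = 1 := by
    intro k r hr hr1
    unfold eNorm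
    simp [Real.sq_sqrt (hr _), hr1]
  have hw : ∀ {k : ℕ} (r : Fin k → ℝ) (x : Fin k → ℂ), (∀ i, 0 ≤ r i) →
      ∑ i, r i * ‖x i * (((√(r i))⁻¹ : ℝ) : ℂ)‖ ^ 2 ≤ ∑ i, ‖x i‖ ^ 2 := by
    intro k r x hr
    refine Finset.sum_le_sum fun i _ => ?_
    rw [norm_mul, mul_pow, Complex.norm_real, Real.norm_eq_abs, sq_abs, inv_pow,
      Real.sq_sqrt (hr i)]
    rcases eq_or_lt_of_le (hr i) with h0 | h0
    · rw [← h0]; simp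
    · have : r i * (‖x i‖ ^ 2 * (r i)⁻¹) = ‖x i‖ ^ 2 := by field_simp
      exact this.le
  refine ⟨fun i => ((√(p i) : ℝ) : ℂ), fun j => ((√(q j) : ℝ) : ℂ),
    Matrix.of fun i j => (((√(p i))⁻¹ : ℝ) : ℂ) * X i j * (((√(q j))⁻¹ : ℝ) : ℂ), ?_, ?_⟩
  · ext i j
    rw [Matrix.mul_diagonal, Matrix.diagonal_conjTranspose, Matrix.diagonal_mul]
    simp only [Pi.star_apply, Matrix.of_apply, Complex.star_def, Complex.conj_ofReal]
    by_cases hx : X i j = 0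
    · simp [hx]
    have hx2 : 0 < ‖X i j‖ ^ 2 := by positivity
    have hpi : 0 < p i := by
      refine (hp i).lt_of_ne fun h0 => ?_
      have := hz i j ((q j + 1) / ‖X i j‖ ^ 2) 1
      rw [← h0, mul_one, div_mul_cancel₀ _ hx2.ne'] at this
      linarith [hq j]
    have hqj : 0 < q j := by
      refine (hq j).lt_of_ne fun h0 => ?_
      have := hz i j 1 (p i + 1)
      rw [← h0] at this
      nlinarith [hp i, mul_nonneg (hp i) hx2.le]
    have h1 : ((√(p i) : ℝ) : ℂ) ≠ 0 := by
      exact_mod_cast (Real.sqrt_pos.mpr hpi).ne'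
    have h2 : ((√(q j) : ℝ) : ℂ) ≠ 0 := by
      exact_mod_cast (Real.sqrt_pos.mpr hqj).ne'
    push_cast
    field_simp
  · rw [hnorm p hp hp1, hnorm q hq hq1, one_mul, mul_one]
    refine ContinuousLinearMap.opNorm_le_bound _ zero_le_one fun y => ?_
    rw [one_mul]
    set C : Matrix (Fin m) (Fin n) ℂ :=
      Matrix.of fun i j => (((√(p i))⁻¹ : ℝ) : ℂ) * X i j * (((√(q j))⁻¹ : ℝ) : ℂ) with hC
    set z : EuclideanSpace ℂ (Fin m) := (Matrix.toEuclideanLin C).toContinuousLinearMap y with hzdef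
    have hzi : ∀ i, z i = ∑ j, C i j * y j := by
      intro i
      simp [hzdef, Matrix.toLpLin_apply, Matrix.mulVec, dotProduct]
    have h1 := h (fun i => star (z i) * (((√(p i))⁻¹ : ℝ) : ℂ))
      (fun j => y j * (((√(q j))⁻¹ : ℝ) : ℂ))
    have e : (∑ i, ∑ j, star (z i) * (((√(p i))⁻¹ : ℝ) : ℂ) * X i j *
        (y j * (((√(q j))⁻¹ : ℝ) : ℂ))) = ((∑ i, ‖z i‖ ^ 2 : ℝ) : ℂ) := by
      push_cast
      refine Finset.sum_congr rfl fun i _ => ?_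
      rw [← Complex.mul_conj', mul_comm (z i)]
      conv_rhs => arg 2; rw [hzi i]
      rw [← Complex.star_def, Finset.mul_sum]
      refine Finset.sum_congr rfl fun j _ => ?_
      simp only [hC, Matrix.of_apply]
      push_cast
      ring
    rw [e, Complex.ofReal_re] at h1
    have h2 := hw p (fun i => star (z i)) hp
    have h3 := hw q (fun j => y j) hq
    simp only [norm_star] at h2
    rw [EuclideanSpace.norm_eq, EuclideanSpace.norm_eq]
    apply Real.sqrt_le_sqrt
    linarith

/-- Duality: the unit ball for the completely bounded bilinear-form norm is the polar of
the unit ball for the Schur multiplier norm with respect to `⟨X,Y⟩ = Tr(Yᴴ X)`. -/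
theorem cb_bilinear_ball_eq_polar_of_schur_ball
    (m n : ℕ) (X : Matrix (Fin m) (Fin n) ℂ) :
    (∀ (l : ℕ) (L : Matrix (Fin l) (Fin m) ℂ) (R : Matrix (Fin l) (Fin n) ℂ),
        colNorm L ≤ 1 → colNorm R ≤ 1 → ‖((Lᴴ * R)ᴴ * X).trace‖ ≤ 1) ↔
      (∃ (η : Fin m → ℂ) (ξ : Fin n → ℂ) (C : Matrix (Fin m) (Fin n) ℂ),
        X = (Matrix.diagonal η)ᴴ * C * Matrix.diagonal ξ ∧
        eNorm η * opNorm C * eNorm ξ ≤ 1) := by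
  constructor
  · intro hX
    rcases isEmpty_or_nonempty (Fin m) with hm | hm
    · exact ⟨0, 0, 0, by ext i; exact isEmptyElim i, by simp [eNorm]⟩
    rcases isEmpty_or_nonempty (Fin n) with hn | hn
    · exact ⟨0, 0, 0, by ext i j; exact isEmptyElim j, by simp [eNorm]⟩
    exact hard_direction hX
  · rintro ⟨η, ξ, C, rfl, h⟩ l L R hL hR
    exact easy_direction L R hL hR η ξ C h
end
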